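/- arXiv:2511.01204 — 2 statements merged into one kernel-verified Lean document; each statement's English description precedes it below -/
import Mathlib

section
/- Let Ω ⊂ ℝ^n be a bounded open set and ε_i → 0. Suppose u_{ε_i} ∈ W^{1,2}(Ω; [-1,1]) satisfies J_{ε_i}(u_{ε_i}) ≤ E_0 < ∞ for all i. Then there is a subsequence of u_{ε_i} converging in L^1(Ω) and almost everywhere to some u_0 ∈ BV(Ω; {±1}) with total variation ∫_Ω |∇u_0| ≤ E_0/2. -/
open MeasureTheory Metric Set Filter
noncomputable section

/-- The divergence of a vector field `g : ℝⁿ → ℝⁿ`. -/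
def divg {n : ℕ} (g : EuclideanSpace ℝ (Fin n) → EuclideanSpace ℝ (Fin n))
    (x : EuclideanSpace ℝ (Fin n)) : ℝ :=
  ∑ i : Fin n, fderiv ℝ g x (EuclideanSpace.single i 1) i

/-- The set of numbers `∫_Ω u · div g` over admissible test vector fields `g`
(`C¹`, compactly supported in `Ω`, `‖g‖ ≤ 1`); its supremum is the total variation
`∫_Ω |∇u|` of `u` in `Ω`. -/
def tvSet {n : ℕ} (Ω : Set (EuclideanSpace ℝ (Fin n))) (u : EuclideanSpace ℝ (Fin n) → ℝ) :
    Set ℝ :=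
  { t | ∃ g : EuclideanSpace ℝ (Fin n) → EuclideanSpace ℝ (Fin n),
      ContDiff ℝ 1 g ∧ HasCompactSupport g ∧ tsupport g ⊆ Ω ∧ (∀ x, ‖g x‖ ≤ 1) ∧
      t = ∫ x in Ω, u x * divg g x }


open scoped ENNReal

/-- FTC inequality along segments, with no integrability assumption. -/
lemma aux_segment {E : Type*} [NormedAddCommGroup E] [NormedSpace ℝ E]
    [MeasurableSpace E] [BorelSpace E] [SecondCountableTopology E]
    {Ω : Set E} (hΩ : IsOpen Ω) {u : E → ℝ} (hu : DifferentiableOn ℝ u Ω) {x y : E}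
    (hxy : ∀ t ∈ Icc (0 : ℝ) 1, x + t • (y - x) ∈ Ω) :
    ‖u x - u y‖ₑ ≤ ‖y - x‖ₑ * ∫⁻ t in Icc (0 : ℝ) 1, ‖fderiv ℝ u (x + t • (y - x))‖ₑ := by
  by_cases hne : x = y
  · simp [hne]
  have hne' : ‖y - x‖ₑ ≠ 0 := by simpa [sub_eq_zero] using fun h => hne h.symm
  by_cases htop : ∫⁻ t in Icc (0 : ℝ) 1, ‖fderiv ℝ u (x + t • (y - x))‖ₑ = ∞
  · rw [htop, ENNReal.mul_top hne']; exact le_top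
  have hcont : Continuous fun t : ℝ => x + t • (y - x) := by fun_prop
  have hmeas : Measurable fun t : ℝ => fderiv ℝ u (x + t • (y - x)) (y - x) :=
    (measurable_fderiv_apply_const ℝ u (y - x)).comp hcont.measurable
  have hbound : ∫⁻ t in Icc (0 : ℝ) 1, ‖fderiv ℝ u (x + t • (y - x)) (y - x)‖ₑ
      ≤ ‖y - x‖ₑ * ∫⁻ t in Icc (0 : ℝ) 1, ‖fderiv ℝ u (x + t • (y - x))‖ₑ := by
    rw [mul_comm, ← lintegral_mul_const' _ _ (by simp)]
    exact lintegral_mono fun t => ContinuousLinearMap.le_opENorm _ _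
  have hint : IntegrableOn (fun t : ℝ => fderiv ℝ u (x + t • (y - x)) (y - x)) (Icc 0 1) := by
    refine ⟨hmeas.aestronglyMeasurable, ?_⟩
    exact lt_of_le_of_lt hbound (ENNReal.mul_lt_top (by simp) (lt_top_iff_ne_top.2 htop))
  have hderiv : ∀ t ∈ uIcc (0 : ℝ) 1, HasDerivAt (fun t : ℝ => u (x + t • (y - x)))
      (fderiv ℝ u (x + t • (y - x)) (y - x)) t := by
    intro t ht
    rw [uIcc_of_le zero_le_one] at ht
    have h1 := (hu.differentiableAt (hΩ.mem_nhds (hxy t ht))).hasFDerivAt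
    have h2 : HasDerivAt (fun t : ℝ => x + t • (y - x)) (y - x) t := by
      simpa using ((hasDerivAt_id t).smul_const (y - x)).const_add x
    exact h1.comp_hasDerivAt t h2
  have key := intervalIntegral.integral_eq_sub_of_hasDerivAt hderiv
    ((intervalIntegrable_iff_integrableOn_Icc_of_le zero_le_one).2 hint)
  have : u y - u x = ∫ t in Icc (0 : ℝ) 1, fderiv ℝ u (x + t • (y - x)) (y - x) := by
    rw [intervalIntegral.integral_of_le zero_le_one, ← integral_Icc_eq_integral_Ioc] at key
    rw [key]; simp
  rw [← enorm_neg, neg_sub, this]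
  exact (enorm_integral_le_lintegral_enorm _).trans hbound

lemma aux_scale {n : ℕ} {F : EuclideanSpace ℝ (Fin n) → ℝ≥0∞} (hF : Measurable F)
    (a : EuclideanSpace ℝ (Fin n)) {r : ℝ} (hr : 1 / 2 ≤ r) :
    ∫⁻ y, F (a + r • y) ≤ 2 ^ n * ∫⁻ y, F y := by
  have hr0 : r ≠ 0 := by rintro rfl; norm_num at hr
  have h1 : ∫⁻ y, F (a + r • y) = ∫⁻ z, F (a + z) ∂(Measure.map (fun x => r • x) volume) := by
    rw [lintegral_map (by fun_prop) (by fun_prop)]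
  rw [h1, Measure.map_addHaar_smul _ hr0, lintegral_smul_measure,
    lintegral_add_left_eq_self (μ := volume) F a, smul_eq_mul]
  gcongr
  rw [finrank_euclideanSpace, Fintype.card_fin]
  have hrpos : 0 < r := by linarith
  rw [abs_of_pos (by positivity), ← inv_pow, ENNReal.ofReal_pow (by positivity)]
  gcongr
  rw [← ENNReal.ofReal_ofNat]
  apply ENNReal.ofReal_le_ofReal
  rw [inv_le_comm₀ hrpos (by norm_num)]; linarith

lemma aux_poincare2 {n : ℕ} {Ω Q : Set (EuclideanSpace ℝ (Fin n))} (hΩ : IsOpen Ω)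
    {u : EuclideanSpace ℝ (Fin n) → ℝ} (hu : DifferentiableOn ℝ u Ω)
    (hQ : MeasurableSet Q) (hQc : Convex ℝ Q) (hQΩ : Q ⊆ Ω)
    {d : ℝ≥0∞} (hd : ∀ x ∈ Q, ∀ y ∈ Q, ‖y - x‖ₑ ≤ d) :
    ∫⁻ x in Q, ∫⁻ y in Q, ‖u x - u y‖ₑ ≤
      d * (2 ^ n * (volume Q * ∫⁻ x in Q, ‖fderiv ℝ u x‖ₑ)) := by
  set F : EuclideanSpace ℝ (Fin n) → ℝ≥0∞ := Q.indicator (fun x => ‖fderiv ℝ u x‖ₑ) with hFdef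
  have hF : Measurable F := (measurable_fderiv ℝ u).enorm.indicator hQ
  have hFi : ∫⁻ x in Q, ‖fderiv ℝ u x‖ₑ = ∫⁻ x, F x := (lintegral_indicator hQ _).symm
  have hmem : ∀ x ∈ Q, ∀ y ∈ Q, ∀ t ∈ Icc (0 : ℝ) 1, x + t • (y - x) ∈ Q :=
    fun x hx y hy t ht => hQc.add_smul_sub_mem hx hy ht
  have hpt : ∀ x ∈ Q, ∀ y ∈ Q, ‖u x - u y‖ₑ ≤
      d * ∫⁻ t in Icc (0 : ℝ) 1, F (x + t • (y - x)) := by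
    intro x hx y hy
    refine (aux_segment hΩ hu fun t ht => hQΩ (hmem x hx y hy t ht)).trans ?_
    refine mul_le_mul' (hd x hx y hy) (le_of_eq ?_)
    refine setLIntegral_congr_fun measurableSet_Icc fun t ht => ?_
    simp only [hFdef]
    rw [indicator_of_mem (hmem x hx y hy t ht)]
  have hm3 : Measurable fun p : (EuclideanSpace ℝ (Fin n) × EuclideanSpace ℝ (Fin n)) × ℝ =>
      F (p.1.1 + p.2 • (p.1.2 - p.1.1)) := hF.comp (by fun_prop)
  have hkey : ∀ t ∈ Icc (0 : ℝ) 1, ∫⁻ x in Q, ∫⁻ y in Q, F (x + t • (y - x)) ≤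
      2 ^ n * (volume Q * ∫⁻ x, F x) := by
    intro t ht
    by_cases h : 1 / 2 ≤ t
    · calc ∫⁻ x in Q, ∫⁻ y in Q, F (x + t • (y - x))
          ≤ ∫⁻ x in Q, 2 ^ n * ∫⁻ x, F x := by
            refine lintegral_mono fun x => ?_
            refine (setLIntegral_le_lintegral _ _).trans ?_
            refine le_trans (le_of_eq ?_) (aux_scale hF ((1 - t) • x) h)
            refine lintegral_congr fun y => ?_
            congr 1; module
        _ = _ := by rw [setLIntegral_const]; ring
    · rw [lintegral_lintegral_swap]
      · calc ∫⁻ y in Q, ∫⁻ x in Q, F (x + t • (y - x))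
            ≤ ∫⁻ y in Q, 2 ^ n * ∫⁻ x, F x := by
              refine lintegral_mono fun y => ?_
              refine (setLIntegral_le_lintegral _ _).trans ?_
              refine le_trans (le_of_eq ?_) (aux_scale hF (t • y) (r := 1 - t) (by linarith))
              refine lintegral_congr fun x => ?_
              congr 1; module
          _ = _ := by rw [setLIntegral_const]; ring
      · exact (hF.comp (by fun_prop)).aemeasurable
  calc ∫⁻ x in Q, ∫⁻ y in Q, ‖u x - u y‖ₑ
      ≤ ∫⁻ x in Q, ∫⁻ y in Q, d * ∫⁻ t in Icc (0 : ℝ) 1, F (x + t • (y - x)) := by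
        refine setLIntegral_mono' hQ fun x hx => setLIntegral_mono' hQ fun y hy => hpt x hx y hy
    _ = d * ∫⁻ x in Q, ∫⁻ y in Q, ∫⁻ t in Icc (0 : ℝ) 1, F (x + t • (y - x)) := by
        have hm2 : Measurable fun p : EuclideanSpace ℝ (Fin n) × EuclideanSpace ℝ (Fin n) =>
          ∫⁻ t in Icc (0 : ℝ) 1, F (p.1 + t • (p.2 - p.1)) := hm3.lintegral_prod_right'
        rw [← lintegral_const_mul]
        · refine lintegral_congr fun x => ?_
          rw [lintegral_const_mul]
          exact hm2.comp (measurable_prodMk_left (x := x))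
        · exact hm2.lintegral_prod_right'
    _ = d * ∫⁻ x in Q, ∫⁻ t in Icc (0 : ℝ) 1, ∫⁻ y in Q, F (x + t • (y - x)) := by
        congr 1
        refine lintegral_congr fun x => ?_
        exact lintegral_lintegral_swap (hF.comp (by fun_prop)).aemeasurable
    _ = d * ∫⁻ t in Icc (0 : ℝ) 1, ∫⁻ x in Q, ∫⁻ y in Q, F (x + t • (y - x)) := by
        congr 1
        refine lintegral_lintegral_swap (Measurable.aemeasurable ?_)
        have : Measurable fun p : (EuclideanSpace ℝ (Fin n) × ℝ) × EuclideanSpace ℝ (Fin n) =>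
          F (p.1.1 + p.1.2 • (p.2 - p.1.1)) := hF.comp (by fun_prop)
        exact this.lintegral_prod_right'
    _ ≤ d * ∫⁻ t in Icc (0 : ℝ) 1, 2 ^ n * (volume Q * ∫⁻ x, F x) := by
        refine mul_le_mul' le_rfl ?_
        exact setLIntegral_mono' measurableSet_Icc fun t ht => hkey t ht
    _ = _ := by rw [setLIntegral_const, hFi]; simp

lemma aux_poincare {n : ℕ} {Ω Q : Set (EuclideanSpace ℝ (Fin n))} (hΩ : IsOpen Ω)
    {u : EuclideanSpace ℝ (Fin n) → ℝ} (hu : DifferentiableOn ℝ u Ω)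
    (hub : ∀ x, u x ∈ Icc (-1 : ℝ) 1)
    (hQ : MeasurableSet Q) (hQc : Convex ℝ Q) (hQΩ : Q ⊆ Ω) (hQf : volume Q ≠ ∞)
    {d : ℝ≥0∞} (hd : ∀ x ∈ Q, ∀ y ∈ Q, ‖y - x‖ₑ ≤ d) :
    ∫⁻ x in Q, ‖u x - ⨍ y in Q, u y‖ₑ ≤ d * (2 ^ n * ∫⁻ x in Q, ‖fderiv ℝ u x‖ₑ) := by
  by_cases h0 : volume Q = 0
  · rw [setLIntegral_measure_zero _ _ h0]; exact zero_le
  have hint : IntegrableOn u Q := by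
    have hc : ContinuousOn u Q := hu.continuousOn.mono hQΩ
    have : IsFiniteMeasure (volume.restrict Q) := ⟨by simpa using lt_top_iff_ne_top.2 hQf⟩
    refine Integrable.of_bound (hc.aestronglyMeasurable hQ) 1 (ae_of_all _ fun x => ?_)
    rw [Real.norm_eq_abs, abs_le]; exact hub x
  have hpt : ∀ x, ‖u x - ⨍ y in Q, u y‖ₑ ≤ (volume Q)⁻¹ * ∫⁻ y in Q, ‖u x - u y‖ₑ := by
    intro x
    have : u x - ⨍ y in Q, u y = (volume.real Q)⁻¹ • ∫ y in Q, (u x - u y) := by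
      have hci : IntegrableOn (fun _ => u x) Q := integrableOn_const hQf
      rw [integral_sub hci hint, setAverage_eq, setIntegral_const, smul_sub,
        smul_smul, inv_mul_cancel₀, one_smul]
      exact (ENNReal.toReal_pos h0 hQf).ne'
    rw [this, enorm_smul]
    gcongr
    · have hp : volume.real Q ≠ 0 := (ENNReal.toReal_pos h0 hQf).ne'
      rw [enorm_inv hp, Measure.real,
        Real.enorm_eq_ofReal (by positivity), ENNReal.ofReal_toReal hQf]
    · exact enorm_integral_le_lintegral_enorm _
  calc ∫⁻ x in Q, ‖u x - ⨍ y in Q, u y‖ₑ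
      ≤ ∫⁻ x in Q, (volume Q)⁻¹ * ∫⁻ y in Q, ‖u x - u y‖ₑ := lintegral_mono hpt
    _ = (volume Q)⁻¹ * ∫⁻ x in Q, ∫⁻ y in Q, ‖u x - u y‖ₑ :=
        lintegral_const_mul' _ _ (by simpa using h0)
    _ ≤ (volume Q)⁻¹ * (d * (2 ^ n * (volume Q * ∫⁻ x in Q, ‖fderiv ℝ u x‖ₑ))) := by
        gcongr; exact aux_poincare2 hΩ hu hQ hQc hQΩ hd
    _ = ((volume Q)⁻¹ * volume Q) * (d * (2 ^ n * ∫⁻ x in Q, ‖fderiv ℝ u x‖ₑ)) := by ring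
    _ = _ := by rw [ENNReal.inv_mul_cancel h0 hQf, one_mul]

/-- index of the grid cell of side `1/(k+1)` containing `x`. -/
def cidx {n : ℕ} (k : ℕ) (x : EuclideanSpace ℝ (Fin n)) : Fin n → ℤ :=
  fun i => ⌊((k : ℝ) + 1) * x i⌋

/-- grid cell. -/
def cell {n : ℕ} (k : ℕ) (ν : Fin n → ℤ) : Set (EuclideanSpace ℝ (Fin n)) :=
  cidx k ⁻¹' {ν}

lemma measurable_cidx {n : ℕ} (k : ℕ) : Measurable (cidx (n := n) k) := by
  refine measurable_pi_iff.2 fun i => ?_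
  refine Int.measurable_floor.comp ?_
  fun_prop

lemma measurableSet_cell {n : ℕ} (k : ℕ) (ν : Fin n → ℤ) : MeasurableSet (cell k ν) :=
  measurable_cidx k (measurableSet_singleton ν)

lemma mem_cell_iff {n : ℕ} (k : ℕ) (ν : Fin n → ℤ) (x : EuclideanSpace ℝ (Fin n)) :
    x ∈ cell k ν ↔ ∀ i, (ν i : ℝ) ≤ ((k : ℝ) + 1) * x i ∧ ((k : ℝ) + 1) * x i < ν i + 1 := by
  simp only [cell, mem_preimage, mem_singleton_iff, funext_iff, cidx, Int.floor_eq_iff]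

lemma convex_cell {n : ℕ} (k : ℕ) (ν : Fin n → ℤ) : Convex ℝ (cell k ν) := by
  intro x hx y hy a b ha hb hab
  rw [mem_cell_iff] at *
  intro i
  obtain ⟨h1, h2⟩ := hx i
  obtain ⟨h3, h4⟩ := hy i
  have e : ((k : ℝ) + 1) * (a • x + b • y) i
      = a * (((k : ℝ) + 1) * x i) + b * (((k : ℝ) + 1) * y i) := by
    simp; ring
  rw [e]
  obtain rfl : b = 1 - a := by linarith
  constructor
  · nlinarith
  · rcases ha.eq_or_lt with rfl | ha
    · simpa using h4
    · nlinarith [mul_lt_mul_of_pos_left h2 ha, mul_le_mul_of_nonneg_left h4.le hb]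

lemma norm_cell {n : ℕ} (k : ℕ) (ν : Fin n → ℤ) {x y : EuclideanSpace ℝ (Fin n)}
    (hx : x ∈ cell k ν) (hy : y ∈ cell k ν) : ‖y - x‖ ≤ n / ((k : ℝ) + 1) := by
  rw [mem_cell_iff] at *
  have hk : (0 : ℝ) < (k : ℝ) + 1 := by positivity
  have h1 : ∀ i, |(y - x) i| ≤ 1 / ((k : ℝ) + 1) := by
    intro i
    obtain ⟨h1, h2⟩ := hx i
    obtain ⟨h3, h4⟩ := hy i
    have e : |(y - x) i| * ((k : ℝ) + 1) = |(y - x) i * ((k : ℝ) + 1)| := by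
      rw [abs_mul, abs_of_pos hk]
    rw [le_div_iff₀ hk, e, abs_le]
    simp only [PiLp.sub_apply]
    constructor <;> linarith
  have h2 : ‖y - x‖ ≤ ∑ i, |(y - x) i| := by
    rw [EuclideanSpace.norm_eq]
    refine Real.sqrt_le_iff.2 ⟨Finset.sum_nonneg fun i _ => abs_nonneg _, ?_⟩
    simp only [Real.norm_eq_abs]
    exact Finset.sum_sq_le_sq_sum_of_nonneg fun i _ => abs_nonneg _
  refine h2.trans ((Finset.sum_le_sum fun i _ => h1 i).trans ?_)
  simp [div_eq_mul_inv]

/-- cell average, `0` for cells not inside `Ω`. -/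
def cavg {n : ℕ} (Ω : Set (EuclideanSpace ℝ (Fin n))) (u : EuclideanSpace ℝ (Fin n) → ℝ)
    (k : ℕ) (ν : Fin n → ℤ) : ℝ :=
  open Classical in if cell k ν ⊆ Ω then ⨍ y in cell k ν, u y else 0

lemma cavg_mem {n : ℕ} (Ω : Set (EuclideanSpace ℝ (Fin n))) (u : EuclideanSpace ℝ (Fin n) → ℝ)
    (hub : ∀ x, u x ∈ Icc (-1 : ℝ) 1) (k : ℕ) (ν : Fin n → ℤ) :
    cavg Ω u k ν ∈ Icc (-1 : ℝ) 1 := by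
  rw [mem_Icc, ← abs_le]
  unfold cavg
  split_ifs
  · rw [setAverage_eq, smul_eq_mul, abs_mul, abs_inv, abs_of_nonneg measureReal_nonneg]
    by_cases h : volume (cell k ν) = ∞
    · simp [Measure.real, h]
    have h1 : ‖∫ y in cell k ν, u y‖ ≤ 1 * volume.real (cell k ν) :=
      norm_setIntegral_le_of_norm_le_const (lt_top_iff_ne_top.2 h) fun x _ => by
        rw [Real.norm_eq_abs, abs_le]; exact hub x
    rw [one_mul, Real.norm_eq_abs] at h1
    refine (mul_le_mul_of_nonneg_left h1 (by positivity)).trans ?_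
    exact inv_mul_le_one
  · simp

/-- good set: points in cells inside `Ω` -/
def goodSet {n : ℕ} (Ω : Set (EuclideanSpace ℝ (Fin n))) (k : ℕ) :
    Set (EuclideanSpace ℝ (Fin n)) := cidx k ⁻¹' {ν | cell k ν ⊆ Ω}

lemma measurableSet_goodSet {n : ℕ} (Ω : Set (EuclideanSpace ℝ (Fin n))) (k : ℕ) :
    MeasurableSet (goodSet Ω k) :=
  measurable_cidx k (Set.to_countable _).measurableSet

lemma aux_tendsto_bad {n : ℕ} {Ω : Set (EuclideanSpace ℝ (Fin n))} (hΩ : IsOpen Ω)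
    (hf : volume Ω ≠ ∞) :
    Tendsto (fun k => volume (Ω \ goodSet Ω k)) atTop (nhds 0) := by
  rw [← measure_empty (μ := (volume : Measure (EuclideanSpace ℝ (Fin n))))]
  refine tendsto_measure_of_ae_tendsto_indicator atTop MeasurableSet.empty
    (fun k => hΩ.measurableSet.diff (measurableSet_goodSet Ω k)) hΩ.measurableSet hf
    (Eventually.of_forall fun k => sdiff_subset) (ae_of_all _ fun x => ?_)
  by_cases hx : x ∈ Ω
  · obtain ⟨r, hr, hb⟩ := Metric.isOpen_iff.1 hΩ x hx
    have hlim : Tendsto (fun k : ℕ => (n : ℝ) / ((k : ℝ) + 1)) atTop (nhds 0) :=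
      Tendsto.div_atTop tendsto_const_nhds
        (tendsto_atTop_add_const_right _ _ tendsto_natCast_atTop_atTop)
    filter_upwards [hlim.eventually (gt_mem_nhds hr)] with k hk
    simp only [Set.mem_sdiff, hx, true_and, mem_empty_iff_false, iff_false, not_not]
    intro y hy
    apply hb
    rw [mem_ball, dist_eq_norm]
    exact lt_of_le_of_lt (norm_cell k (cidx k x) rfl hy) hk
  · exact Eventually.of_forall fun k => by simp [hx]

lemma aux_approx {n : ℕ} {Ω : Set (EuclideanSpace ℝ (Fin n))} (hΩ : IsOpen Ω)
    (hf : volume Ω ≠ ∞)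
    {u : EuclideanSpace ℝ (Fin n) → ℝ} (hu : DifferentiableOn ℝ u Ω)
    (hub : ∀ x, u x ∈ Icc (-1 : ℝ) 1) (k : ℕ) :
    ∫⁻ x in Ω, ‖u x - cavg Ω u k (cidx k x)‖ₑ ≤
      ENNReal.ofReal (n / ((k : ℝ) + 1)) * (2 ^ n * ∫⁻ x in Ω, ‖fderiv ℝ u x‖ₑ)
        + volume (Ω \ goodSet Ω k) := by
  have hΩU : Ω = ⋃ ν, (Ω ∩ cell k ν) := by
    rw [← inter_iUnion]
    refine (inter_eq_left.2 fun x _ => mem_iUnion.2 ⟨cidx k x, rfl⟩).symm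
  have hmc : ∀ ν, MeasurableSet (Ω ∩ cell k ν) :=
    fun ν => hΩ.measurableSet.inter (measurableSet_cell k ν)
  have hdisj : Pairwise (Function.onFun Disjoint fun ν : Fin n → ℤ => Ω ∩ cell k ν) := by
    intro ν ν' hne
    refine Set.disjoint_left.2 fun x hx hx' => hne ?_
    exact hx.2.symm.trans hx'.2
  have hbad : volume (Ω \ goodSet Ω k) = ∫⁻ x in Ω, (goodSet Ω k)ᶜ.indicator 1 x := by
    rw [lintegral_indicator_one (measurableSet_goodSet Ω k).compl,
      Measure.restrict_apply (measurableSet_goodSet Ω k).compl, sdiff_eq, inter_comm]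
  have hsplit : ∀ f : EuclideanSpace ℝ (Fin n) → ℝ≥0∞,
      ∫⁻ x in Ω, f x = ∑' ν, ∫⁻ x in Ω ∩ cell k ν, f x := by
    intro f
    conv_lhs => rw [hΩU]
    exact lintegral_iUnion hmc hdisj f
  rw [hbad, hsplit, hsplit (fun x => ‖fderiv ℝ u x‖ₑ), hsplit ((goodSet Ω k)ᶜ.indicator 1),
    ← ENNReal.tsum_mul_left, ← ENNReal.tsum_mul_left, ← ENNReal.tsum_add]
  refine ENNReal.tsum_le_tsum fun ν => ?_
  by_cases hν : cell k ν ⊆ Ω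
  · refine le_trans ?_ le_self_add
    rw [inter_eq_right.2 hν]
    have h1 := aux_poincare hΩ hu hub (measurableSet_cell k ν) (convex_cell k ν) hν
      (measure_ne_top_of_subset hν hf) (d := ENNReal.ofReal (n / ((k : ℝ) + 1)))
      (fun x hx y hy => by
        rw [← ofReal_norm]
        exact ENNReal.ofReal_le_ofReal (norm_cell k ν hx hy))
    refine le_trans (le_of_eq ?_) h1
    refine setLIntegral_congr_fun (measurableSet_cell k ν) fun x hx => ?_
    have : cidx k x = ν := hx
    simp only [this]
    rw [cavg, if_pos hν]
  · refine le_trans ?_ le_add_self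
    refine setLIntegral_mono' (hmc ν) fun x hx => ?_
    have hxν : cidx k x = ν := hx.2
    have : x ∈ (goodSet Ω k)ᶜ := by
      simpa [goodSet, hxν] using hν
    rw [indicator_of_mem this, hxν, cavg, if_neg hν, sub_zero, ← ofReal_norm]
    simp only [Pi.one_apply, ENNReal.ofReal_le_one]
    rw [Real.norm_eq_abs, abs_le]; exact hub x

lemma aux_integrableOn {n : ℕ} {Ω : Set (EuclideanSpace ℝ (Fin n))} (hΩ : IsOpen Ω)
    (hf : volume Ω ≠ ∞) {u : EuclideanSpace ℝ (Fin n) → ℝ} (hu : DifferentiableOn ℝ u Ω)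
    (hub : ∀ x, u x ∈ Icc (-1 : ℝ) 1) : IntegrableOn u Ω := by
  have : IsFiniteMeasure (volume.restrict Ω) := ⟨by simpa using lt_top_iff_ne_top.2 hf⟩
  refine Integrable.of_bound (hu.continuousOn.aestronglyMeasurable hΩ.measurableSet) 1
    (ae_of_all _ fun x => ?_)
  rw [Real.norm_eq_abs, abs_le]; exact hub x

lemma aux_grad_bound {n : ℕ} {Ω : Set (EuclideanSpace ℝ (Fin n))}
    {E₀ ε : ℝ} (hε : 0 < ε) {u : EuclideanSpace ℝ (Fin n) → ℝ}
    (hub : ∀ x, u x ∈ Icc (-1 : ℝ) 1)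
    (hen : (∫⁻ x in Ω, ENNReal.ofReal
          (ε * ‖gradient u x‖ ^ 2 + (if |u x| < 1 then (1 : ℝ) else 0) / ε))
        ≤ ENNReal.ofReal E₀) :
    ∫⁻ x in Ω, ‖fderiv ℝ u x‖ₑ ≤ ENNReal.ofReal (E₀ / 2) := by
  have hpt : ∀ x, 2 * ‖fderiv ℝ u x‖ₑ ≤ ENNReal.ofReal
          (ε * ‖gradient u x‖ ^ 2 + (if |u x| < 1 then (1 : ℝ) else 0) / ε) := by
    intro x
    have hg : ‖gradient u x‖ = ‖fderiv ℝ u x‖ := by simp [gradient]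
    have h2 : (2 : ℝ≥0∞) * ‖fderiv ℝ u x‖ₑ = ENNReal.ofReal (2 * ‖fderiv ℝ u x‖) := by
      rw [ENNReal.ofReal_mul (by norm_num), ofReal_norm]; simp
    rw [h2, hg]
    apply ENNReal.ofReal_le_ofReal
    split_ifs with h
    · have e : ε * ‖fderiv ℝ u x‖ ^ 2 + 1 / ε - 2 * ‖fderiv ℝ u x‖
          = (ε * ‖fderiv ℝ u x‖ - 1) ^ 2 / ε := by field_simp; ring
      have : 0 ≤ (ε * ‖fderiv ℝ u x‖ - 1) ^ 2 / ε := by positivity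
      linarith
    · have h0 : fderiv ℝ u x = 0 := by
        rcases le_total 0 (u x) with hx | hx
        · rw [abs_of_nonneg hx, not_lt] at h
          exact IsLocalMax.fderiv_eq_zero
            (Eventually.of_forall fun y => (hub y).2.trans h)
        · rw [abs_of_nonpos hx, not_lt] at h
          exact IsLocalMin.fderiv_eq_zero
            (Eventually.of_forall fun y => le_trans (by linarith) (hub y).1)
      simp [h0]
  have h := (lintegral_mono (μ := volume.restrict Ω) hpt).trans hen
  rw [lintegral_const_mul _ (measurable_fderiv ℝ u).enorm] at h
  rw [ENNReal.ofReal_div_of_pos (by norm_num), ENNReal.le_div_iff_mul_le (by simp) (by simp)]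
  rw [mul_comm]; simpa using h

lemma aux_compact {n : ℕ} {Ω : Set (EuclideanSpace ℝ (Fin n))} (hΩ : IsOpen Ω)
    (hf : volume Ω ≠ ∞) {us : ℕ → EuclideanSpace ℝ (Fin n) → ℝ}
    (hrange : ∀ i x, us i x ∈ Icc (-1 : ℝ) 1)
    (hdiff : ∀ i, DifferentiableOn ℝ (us i) Ω) {C : ℝ≥0∞} (hC : C ≠ ∞)
    (hgrad : ∀ i, ∫⁻ x in Ω, ‖fderiv ℝ (us i) x‖ₑ ≤ C) :
    ∃ φ : ℕ → ℕ, StrictMono φ ∧ ∃ u₀ : EuclideanSpace ℝ (Fin n) → ℝ,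
      AEStronglyMeasurable u₀ (volume.restrict Ω) ∧
      (∀ᵐ x ∂(volume.restrict Ω), Tendsto (fun i => us (φ i) x) atTop (nhds (u₀ x))) := by
  have hfin : IsFiniteMeasure (volume.restrict Ω) := ⟨by simpa using lt_top_iff_ne_top.2 hf⟩
  -- extract a subsequence along which all cell averages converge
  let A : ℕ → (ℕ × (Fin n → ℤ)) → ℝ := fun i p => cavg Ω (us i) p.1 p.2
  obtain ⟨a, ha, φ, hφ, hlim⟩ := (isCompact_univ_pi
    (fun _ : ℕ × (Fin n → ℤ) => isCompact_Icc (a := (-1 : ℝ)) (b := 1))).tendsto_subseq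
    (x := A) (fun i p _ => cavg_mem Ω (us i) (hrange i) p.1 p.2)
  have hlim' : ∀ k ν, Tendsto (fun i => cavg Ω (us (φ i)) k ν) atTop (nhds (a (k, ν))) :=
    fun k ν => tendsto_pi_nhds.1 hlim (k, ν)
  have ham : ∀ k ν, a (k, ν) ∈ Icc (-1 : ℝ) 1 := fun k ν => ha (k, ν) (mem_univ _)
  have hmeasP : ∀ (k : ℕ) (b : (Fin n → ℤ) → ℝ),
      Measurable fun x : EuclideanSpace ℝ (Fin n) => b (cidx k x) :=
    fun k b => (measurable_of_countable b).comp (measurable_cidx k)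
  have hui : ∀ i, MemLp (us i) 1 (volume.restrict Ω) :=
    fun i => memLp_one_iff_integrable.2 (aux_integrableOn hΩ hf (hdiff i) (hrange i))
  have hPi : ∀ k, MemLp (fun x => a (k, cidx k x)) 1 (volume.restrict Ω) := by
    intro k
    refine memLp_one_iff_integrable.2 (Integrable.of_bound
      (hmeasP k (fun ν => a (k, ν))).aestronglyMeasurable 1 (ae_of_all _ fun x => ?_))
    rw [Real.norm_eq_abs, abs_le]; exact ham _ _
  have hcauchy : CauchySeq fun i => (hui (φ i)).toLp := by
    rw [EMetric.cauchySeq_iff]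
    intro η hη
    -- the errors
    have herr : Tendsto (fun k : ℕ => ENNReal.ofReal (n / ((k : ℝ) + 1)) * (2 ^ n * C)
        + volume (Ω \ goodSet Ω k)) atTop (nhds 0) := by
      have h1 : Tendsto (fun k : ℕ => (n : ℝ) / ((k : ℝ) + 1)) atTop (nhds 0) :=
        Tendsto.div_atTop tendsto_const_nhds
          (tendsto_atTop_add_const_right _ _ tendsto_natCast_atTop_atTop)
      have h2 := (ENNReal.tendsto_ofReal h1)
      have h3 := ENNReal.Tendsto.mul_const (b := 2 ^ n * C) h2
        (Or.inr (ENNReal.mul_ne_top (by simp) hC))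
      simpa using h3.add (aux_tendsto_bad hΩ hf)
    have hη4 : 0 < η / 2 / 2 := by simp [hη.ne']
    obtain ⟨k, hk⟩ := (herr.eventually (gt_mem_nhds hη4)).exists
    have hP : Tendsto (fun i => ∫⁻ x in Ω, ‖cavg Ω (us (φ i)) k (cidx k x) - a (k, cidx k x)‖ₑ)
        atTop (nhds 0) := by
      have : (0 : ℝ≥0∞) = ∫⁻ x in Ω, 0 := by simp
      rw [this]
      refine tendsto_lintegral_of_dominated_convergence (fun _ => 2) (fun i => ?_) (fun i => ?_)
        ?_ (ae_of_all _ fun x => ?_)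
      · exact ((hmeasP k _).sub (hmeasP k (fun ν => a (k, ν)))).enorm
      · refine ae_of_all _ fun x => ?_
        have h1 := cavg_mem Ω (us (φ i)) (hrange (φ i)) k (cidx k x)
        have h2 := ham k (cidx k x)
        show ‖cavg Ω (us (φ i)) k (cidx k x) - a (k, cidx k x)‖ₑ ≤ 2
        rw [← ofReal_norm, ← ENNReal.ofReal_ofNat]
        apply ENNReal.ofReal_le_ofReal
        rw [Real.norm_eq_abs, abs_le]
        constructor <;> linarith [h1.1, h1.2, h2.1, h2.2]
      · simpa using ENNReal.mul_ne_top (by simp) hf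
      · have := ((hlim' k (cidx k x)).sub_const (a (k, cidx k x))).enorm
        simpa using this
    obtain ⟨N, hN⟩ := eventually_atTop.1 (hP.eventually (gt_mem_nhds hη4))
    have hclose : ∀ i ≥ N, edist ((hui (φ i)).toLp) ((hPi k).toLp) < η / 2 := by
      intro i hi
      rw [Lp.edist_toLp_toLp, eLpNorm_one_eq_lintegral_enorm]
      calc ∫⁻ x in Ω, ‖us (φ i) x - a (k, cidx k x)‖ₑ
          ≤ ∫⁻ x in Ω, (‖us (φ i) x - cavg Ω (us (φ i)) k (cidx k x)‖ₑ
            + ‖cavg Ω (us (φ i)) k (cidx k x) - a (k, cidx k x)‖ₑ) := by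
            refine lintegral_mono fun x => ?_
            refine le_trans (le_of_eq ?_) (enorm_add_le _ _)
            simp
        _ = (∫⁻ x in Ω, ‖us (φ i) x - cavg Ω (us (φ i)) k (cidx k x)‖ₑ)
            + ∫⁻ x in Ω, ‖cavg Ω (us (φ i)) k (cidx k x) - a (k, cidx k x)‖ₑ :=
            lintegral_add_right _ ((hmeasP k (cavg Ω (us (φ i)) k)).sub
              (hmeasP k (fun ν => a (k, ν)))).enorm
        _ < η / 2 / 2 + η / 2 / 2 := by
            refine ENNReal.add_lt_add (lt_of_le_of_lt ?_ hk) (hN i hi)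
            refine (aux_approx hΩ hf (hdiff _) (hrange _) k).trans ?_
            gcongr
            exact hgrad _
        _ = η / 2 := ENNReal.add_halves _
    refine ⟨N, fun i hi j hj => ?_⟩
    calc _ ≤ _ := edist_triangle_right _ _ ((hPi k).toLp)
      _ < η / 2 + η / 2 := ENNReal.add_lt_add (hclose i hi) (hclose j hj)
      _ = η := ENNReal.add_halves _
  obtain ⟨F, hF⟩ := cauchySeq_tendsto_of_complete hcauchy
  obtain ⟨ψ, hψ, hae⟩ := (tendstoInMeasure_of_tendsto_Lp hF).exists_seq_tendsto_ae
  refine ⟨φ ∘ ψ, hφ.comp hψ, F, Lp.aestronglyMeasurable F, ?_⟩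
  have hco : ∀ᵐ x ∂(volume.restrict Ω), ∀ i, ((hui (φ i)).toLp : _ → ℝ) x = us (φ i) x :=
    ae_all_iff.2 fun i => (hui (φ i)).coeFn_toLp
  filter_upwards [hae, hco] with x hx hx'
  simpa only [hx', Function.comp_apply] using hx

lemma aux_ibp {n : ℕ} {Ω : Set (EuclideanSpace ℝ (Fin n))} (hΩ : IsOpen Ω)
    (hf : volume Ω ≠ ∞) {u : EuclideanSpace ℝ (Fin n) → ℝ} (hu : DifferentiableOn ℝ u Ω)
    (hub : ∀ x, u x ∈ Icc (-1 : ℝ) 1) {E₁ : ℝ} (hE₁ : 0 ≤ E₁)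
    (hgrad : ∫⁻ x in Ω, ‖fderiv ℝ u x‖ₑ ≤ ENNReal.ofReal E₁)
    {g : EuclideanSpace ℝ (Fin n) → EuclideanSpace ℝ (Fin n)}
    (hg : ContDiff ℝ 1 g) (hgc : HasCompactSupport g) (hgs : tsupport g ⊆ Ω)
    (hg1 : ∀ x, ‖g x‖ ≤ 1) :
    ∫ x in Ω, u x * divg g x ≤ E₁ := by
  have hui := aux_integrableOn hΩ hf hu hub
  have hub' : ∀ x, ‖u x‖ ≤ 1 := fun x => by rw [Real.norm_eq_abs, abs_le]; exact hub x
  have hfi : IntegrableOn (fderiv ℝ u) Ω :=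
    ⟨(measurable_fderiv ℝ u).aestronglyMeasurable, hgrad.trans_lt ENNReal.ofReal_lt_top⟩
  let v : Fin n → EuclideanSpace ℝ (Fin n) := fun j => EuclideanSpace.single j 1
  let G : Fin n → EuclideanSpace ℝ (Fin n) → ℝ := fun j x => g x j
  have hGd : ∀ j, ContDiff ℝ 1 (G j) := fun j =>
    (EuclideanSpace.proj (𝕜 := ℝ) j).contDiff.comp hg
  have hGf : ∀ j x w, fderiv ℝ (G j) x w = (fderiv ℝ g x w) j := by
    intro j x w
    have h1 := (hg.differentiable (by norm_num) x).hasFDerivAt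
    have h2 := ((EuclideanSpace.proj (𝕜 := ℝ) j).hasFDerivAt (x := g x)).comp x h1
    have h3 : fderiv ℝ (G j) x = _ := h2.fderiv
    rw [h3]; rfl
  have hGs : ∀ j, tsupport (G j) ⊆ tsupport g := by
    intro j
    refine closure_mono fun x hx => ?_
    rw [Function.mem_support] at hx ⊢
    intro h0; apply hx; simp [G, h0]
  have hGc : ∀ j, HasCompactSupport (G j) := fun j =>
    hgc.of_isClosed_subset (isClosed_tsupport _) (hGs j)
  have hG0 : ∀ j, ∀ x ∉ Ω, G j x = 0 := fun j x hx =>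
    image_eq_zero_of_notMem_tsupport fun h => hx (hgs (hGs j h))
  have hG0' : ∀ j, ∀ x ∉ Ω, fderiv ℝ (G j) x (v j) = 0 := fun j x hx => by
    have : fderiv ℝ (G j) x = 0 := image_eq_zero_of_notMem_tsupport
      fun h => hx (hgs (hGs j (tsupport_fderiv_subset ℝ h)))
    simp [this]
  have hDc : ∀ j, Continuous fun x => fderiv ℝ (G j) x (v j) := fun j =>
    ((hGd j).continuous_fderiv (by norm_num)).clm_apply continuous_const
  have hDi : ∀ j, Integrable (fun x => fderiv ℝ (G j) x (v j)) := fun j =>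
    (hDc j).integrable_of_hasCompactSupport ((hGc j).fderiv_apply (𝕜 := ℝ) (v j))
  have hGb : ∀ j x, ‖G j x‖ ≤ 1 := fun j x => (PiLp.norm_apply_le (g x) j).trans (hg1 x)
  have hmv : ∀ j, Integrable (fun x => fderiv ℝ u x (v j)) (volume.restrict Ω) := fun j =>
    (ContinuousLinearMap.apply ℝ ℝ (v j)).integrable_comp hfi
  have hext : ∀ {f : EuclideanSpace ℝ (Fin n) → ℝ}, IntegrableOn f Ω → (∀ x ∉ Ω, f x = 0) →
      Integrable f := fun h h0 =>
    (integrableOn_iff_integrable_of_support_subset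
      (fun x hx => by_contra fun hx' => hx (h0 x hx'))).1 h
  have i1 : ∀ j, IntegrableOn (fun x => fderiv ℝ u x (v j) * G j x) Ω := fun j =>
    (hmv j).mul_bdd (hGd j).continuous.aestronglyMeasurable (ae_of_all _ (hGb j))
  have i2 : ∀ j, IntegrableOn (fun x => u x * fderiv ℝ (G j) x (v j)) Ω := fun j =>
    (hDi j).integrableOn.bdd_mul hui.aestronglyMeasurable (ae_of_all _ hub')
  have i3 : ∀ j, IntegrableOn (fun x => u x * G j x) Ω := fun j =>
    hui.mul_bdd (hGd j).continuous.aestronglyMeasurable (ae_of_all _ (hGb j))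
  have hibp : ∀ j, ∫ x in Ω, u x * fderiv ℝ (G j) x (v j)
      = - ∫ x in Ω, fderiv ℝ u x (v j) * G j x := by
    intro j
    rw [setIntegral_eq_integral_of_forall_compl_eq_zero (fun x hx => by rw [hG0' j x hx, mul_zero]),
      setIntegral_eq_integral_of_forall_compl_eq_zero (fun x hx => by rw [hG0 j x hx, mul_zero])]
    refine integral_mul_fderiv_eq_neg_fderiv_mul_of_integrable
      (hext (i1 j) fun x hx => by rw [hG0 j x hx, mul_zero])
      (hext (i2 j) fun x hx => by rw [hG0' j x hx, mul_zero])
      (hext (i3 j) fun x hx => by rw [hG0 j x hx, mul_zero])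
      (fun x hx => hu.differentiableAt (hΩ.mem_nhds (hgs (hGs j hx))))
      (fun x _ => (hGd j).differentiable (by norm_num) x)
  have hsum : ∫ x in Ω, u x * divg g x = - ∫ x in Ω, fderiv ℝ u x (g x) := by
    have e1 : ∀ x, u x * divg g x = ∑ j, u x * fderiv ℝ (G j) x (v j) := by
      intro x
      simp only [divg, Finset.mul_sum, hGf]; rfl
    have e2 : ∀ x, fderiv ℝ u x (g x) = ∑ j, fderiv ℝ u x (v j) * G j x := by
      intro x
      have : g x = ∑ j, G j x • v j := by
        ext i; simp [v, G, Finset.sum_apply, Pi.single_apply]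
      conv_lhs => rw [this]
      simp [mul_comm]
    simp_rw [e1, e2]
    rw [integral_finsetSum _ fun j _ => i2 j, integral_finsetSum _ fun j _ => i1 j,
      ← Finset.sum_neg_distrib]
    exact Finset.sum_congr rfl fun j _ => hibp j
  rw [hsum]
  refine (le_abs_self _).trans ?_
  rw [abs_neg, ← Real.norm_eq_abs]
  refine (norm_integral_le_lintegral_norm _).trans ?_
  refine ENNReal.toReal_le_of_le_ofReal hE₁ (le_trans (lintegral_mono fun x => ?_) hgrad)
  rw [ofReal_norm]
  refine (ContinuousLinearMap.le_opENorm _ _).trans ?_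
  refine mul_le_of_le_one_right' ?_
  rw [← ofReal_norm, ENNReal.ofReal_le_one]
  exact hg1 x

/-- **BV compactness for bounded-energy sequences.**
If `Ω ⊂ ℝⁿ` is bounded open, `εᵢ → 0`, and `u_{εᵢ} ∈ W^{1,2}(Ω;[-1,1])` satisfy
`J_{εᵢ}(u_{εᵢ}) ≤ E₀`, then along a subsequence `u_{εᵢ}` converges in `L¹(Ω)` and
a.e. to some `u₀ ∈ BV(Ω; {±1})` with total variation `∫_Ω |∇u₀| ≤ E₀/2`. -/
theorem stmt_3 (n : ℕ) (Ω : Set (EuclideanSpace ℝ (Fin n))) (hΩo : IsOpen Ω)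
    (hΩb : Bornology.IsBounded Ω) (E₀ : ℝ) (hE₀ : 0 < E₀)
    (εs : ℕ → ℝ) (hεpos : ∀ i, 0 < εs i) (hεlim : Tendsto εs atTop (nhds 0))
    (us : ℕ → EuclideanSpace ℝ (Fin n) → ℝ)
    (hrange : ∀ i x, us i x ∈ Icc (-1 : ℝ) 1)
    (hdiff : ∀ i, DifferentiableOn ℝ (us i) Ω)
    (henergy : ∀ i,
      (∫⁻ x in Ω, ENNReal.ofReal
          (εs i * ‖gradient (us i) x‖ ^ 2 + (if |us i x| < 1 then (1 : ℝ) else 0) / εs i))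
        ≤ ENNReal.ofReal E₀) :
    ∃ φ : ℕ → ℕ, StrictMono φ ∧
      ∃ u₀ : EuclideanSpace ℝ (Fin n) → ℝ,
        (∀ᵐ x ∂(volume.restrict Ω), |u₀ x| = 1) ∧
        Tendsto (fun i => ∫ x in Ω, |us (φ i) x - u₀ x|) atTop (nhds 0) ∧
        (∀ᵐ x ∂(volume.restrict Ω), Tendsto (fun i => us (φ i) x) atTop (nhds (u₀ x))) ∧
        BddAbove (tvSet Ω u₀) ∧ sSup (tvSet Ω u₀) ≤ E₀ / 2 := by
  have hf : volume Ω ≠ ∞ := hΩb.measure_lt_top.ne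
  have hfin : IsFiniteMeasure (volume.restrict Ω) := ⟨by simpa using lt_top_iff_ne_top.2 hf⟩
  have hgrad : ∀ i, ∫⁻ x in Ω, ‖fderiv ℝ (us i) x‖ₑ ≤ ENNReal.ofReal (E₀ / 2) :=
    fun i => aux_grad_bound (hεpos i) (hrange i) (henergy i)
  obtain ⟨φ, hφ, u₀, hu₀m, hae⟩ := aux_compact hΩo hf hrange hdiff ENNReal.ofReal_ne_top hgrad
  have husm : ∀ i, AEStronglyMeasurable (us i) (volume.restrict Ω) := fun i =>
    (hdiff i).continuousOn.aestronglyMeasurable hΩo.measurableSet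
  have hus1 : ∀ i x, |us i x| ≤ 1 := fun i x => abs_le.2 (hrange i x)
  have hu₀1 : ∀ᵐ x ∂(volume.restrict Ω), |u₀ x| ≤ 1 := by
    filter_upwards [hae] with x hx
    exact le_of_tendsto hx.abs (Eventually.of_forall fun i => hus1 _ _)
  refine ⟨φ, hφ, u₀, ?_, ?_, hae, ?_⟩
  · -- `|u₀| = 1` a.e.
    have hlim : Tendsto (fun i => ∫⁻ x in Ω, ENNReal.ofReal (1 - |us (φ i) x|)) atTop
        (nhds (∫⁻ x in Ω, ENNReal.ofReal (1 - |u₀ x|))) := by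
      refine tendsto_lintegral_of_dominated_convergence' (fun _ => 1) (fun i => ?_) (fun i => ?_)
        ?_ ?_
      · exact ((husm (φ i)).aemeasurable.abs.const_sub 1).ennreal_ofReal
      · refine ae_of_all _ fun x => ?_
        simp
      · simpa using hf
      · filter_upwards [hae] with x hx
        exact ENNReal.tendsto_ofReal (hx.abs.const_sub 1)
    have hle : ∀ i, ∫⁻ x in Ω, ENNReal.ofReal (1 - |us i x|) ≤
        ENNReal.ofReal (εs i) * ENNReal.ofReal E₀ := by
      intro i
      refine le_trans ?_ (mul_le_mul' le_rfl (henergy i))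
      rw [← lintegral_const_mul' _ _ ENNReal.ofReal_ne_top]
      refine lintegral_mono fun x => ?_
      rw [← ENNReal.ofReal_mul (hεpos i).le]
      apply ENNReal.ofReal_le_ofReal
      have hε := hεpos i
      split_ifs with h
      · have : εs i * (εs i * ‖gradient (us i) x‖ ^ 2 + 1 / εs i)
            = (εs i * ‖gradient (us i) x‖) ^ 2 + 1 := by field_simp
        rw [this]
        have := abs_nonneg (us i x)
        nlinarith [sq_nonneg (εs i * ‖gradient (us i) x‖)]
      · have : 0 ≤ εs i * (εs i * ‖gradient (us i) x‖ ^ 2 + 0 / εs i) := by positivity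
        linarith
    have h0 : Tendsto (fun i => ENNReal.ofReal (εs (φ i)) * ENNReal.ofReal E₀) atTop (nhds 0) := by
      have h1 := ENNReal.tendsto_ofReal (hεlim.comp hφ.tendsto_atTop)
      have h2 := ENNReal.Tendsto.mul_const (b := ENNReal.ofReal E₀) h1
        (Or.inr ENNReal.ofReal_ne_top)
      simpa using h2
    have hz : ∫⁻ x in Ω, ENNReal.ofReal (1 - |u₀ x|) = 0 :=
      le_antisymm (le_of_tendsto_of_tendsto' hlim h0 fun i => hle (φ i)) zero_le
    rw [lintegral_eq_zero_iff' (hu₀m.aemeasurable.abs.const_sub 1).ennreal_ofReal] at hz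
    filter_upwards [hz, hu₀1] with x hx hx1
    have : 1 - |u₀ x| ≤ 0 := ENNReal.ofReal_eq_zero.1 hx
    linarith
  · have h := tendsto_integral_of_dominated_convergence (μ := volume.restrict Ω)
      (F := fun i x => |us (φ i) x - u₀ x|) (f := fun _ => (0 : ℝ)) (fun _ => (2 : ℝ))
      (fun i => ((husm (φ i)).sub hu₀m).norm) (integrable_const _)
      (fun i => by
        filter_upwards [hu₀1] with x hx
        rw [Real.norm_eq_abs, abs_abs]
        have := hus1 (φ i) x
        exact (abs_sub _ _).trans (by linarith))
      (by
        filter_upwards [hae] with x hx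
        simpa using (hx.sub_const (u₀ x)).abs)
    simpa using h
  · have hub : ∀ t ∈ tvSet Ω u₀, t ≤ E₀ / 2 := by
      rintro t ⟨g, hg, hgc, hgs, hg1, rfl⟩
      have hdc : Continuous (divg g) := by
        unfold divg
        have := hg.continuous_fderiv (by norm_num)
        fun_prop
      have hds : HasCompactSupport (divg g) := by
        refine (hgc.fderiv (𝕜 := ℝ)).mono fun x hx => ?_
        rw [Function.mem_support] at hx ⊢
        intro h0; apply hx; simp [divg, h0]
      have hdi : Integrable (divg g) := hdc.integrable_of_hasCompactSupport hds
      have hlim : Tendsto (fun i => ∫ x in Ω, us (φ i) x * divg g x) atTop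
          (nhds (∫ x in Ω, u₀ x * divg g x)) := by
        refine tendsto_integral_of_dominated_convergence (fun x => |divg g x|)
          (fun i => (husm (φ i)).mul hdc.aestronglyMeasurable) hdi.norm.integrableOn
          (fun i => ae_of_all _ fun x => ?_) ?_
        · rw [Real.norm_eq_abs, abs_mul]
          exact mul_le_of_le_one_left (abs_nonneg _) (hus1 _ _)
        · filter_upwards [hae] with x hx
          exact hx.mul_const _
      exact le_of_tendsto' hlim fun i =>
        aux_ibp hΩo hf (hdiff (φ i)) (hrange (φ i)) (by positivity) (hgrad (φ i)) hg hgc hgs hg1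
    exact ⟨⟨E₀ / 2, hub⟩, Real.sSup_le hub (by positivity)⟩
end
end

section
/- Let Ω ⊂ ℝ^n be a bounded open set with smooth boundary and u ∈ L^1(Ω;[-1,1]). Then there exists a family u_ε ∈ L^1(Ω;[-1,1]) with u_ε → u in L^1(Ω) and limsup_{ε→0+} J_ε(u_ε) ≤ J_0(u), where J_ε(v) = ∫_Ω ( ε|∇v|² + χ_{(-1,1)}(v)/ε ) dx and J_0(u) = 2∫_Ω|∇u| if u ∈ BV(Ω;{±1}), +∞ otherwise. -/
open MeasureTheory Metric Set Filter Classical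
noncomputable section

/-- The free boundary Allen–Cahn energy `J_ε(v) = ∫_Ω ε|∇v|² + χ_{(-1,1)}(v)/ε`
for `v ∈ W^{1,2}` (modelled as differentiability on `Ω`), `+∞` otherwise. -/
def Jeps {n : ℕ} (Ω : Set (EuclideanSpace ℝ (Fin n))) (ε : ℝ)
    (v : EuclideanSpace ℝ (Fin n) → ℝ) : ENNReal :=
  if DifferentiableOn ℝ v Ω then
    ∫⁻ x in Ω, ENNReal.ofReal
      (ε * ‖gradient v x‖ ^ 2 + (if |v x| < 1 then (1 : ℝ) else 0) / ε)
  else ⊤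

/-- The limit functional `J₀(u) = 2∫_Ω |∇u|` if `u ∈ BV(Ω;{±1})`, `+∞` otherwise. -/
def Jzero {n : ℕ} (Ω : Set (EuclideanSpace ℝ (Fin n)))
    (u : EuclideanSpace ℝ (Fin n) → ℝ) : ENNReal :=
  if (∀ᵐ x ∂(volume.restrict Ω), |u x| = 1) ∧ BddAbove (tvSet Ω u) then
    ENNReal.ofReal (2 * sSup (tvSet Ω u))
  else ⊤

/-- `Ω` has smooth boundary (local smooth defining functions with nonvanishing gradient). -/
def HasSmoothBoundary {n : ℕ} (Ω : Set (EuclideanSpace ℝ (Fin n))) : Prop :=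
  ∀ x ∈ frontier Ω, ∃ (U : Set (EuclideanSpace ℝ (Fin n))) (f : EuclideanSpace ℝ (Fin n) → ℝ),
    IsOpen U ∧ x ∈ U ∧ ContDiffOn ℝ (⊤ : ℕ∞) f U ∧
    (∀ y ∈ U, (y ∈ Ω ↔ f y < 0)) ∧ (∀ y ∈ U, (y ∈ frontier Ω ↔ f y = 0)) ∧
    ∀ y ∈ U, gradient f y ≠ 0

/-- A smooth profile, obtained by averaging the clamp function. -/
lemma exists_profile (κ : ℝ) (hκ : 0 < κ) :
    ∃ ψ ψ' : ℝ → ℝ, (∀ x, HasDerivAt ψ (ψ' x) x) ∧ (∀ x, |ψ' x| ≤ 1) ∧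
      (∀ x, ψ x ∈ Icc (-1 : ℝ) 1) ∧ (∀ x, 1 + κ ≤ x → ψ x = 1) ∧
      (∀ x, x ≤ -(1 + κ) → ψ x = -1) := by
  let c : ℝ → ℝ := fun x => max (-1) (min x 1)
  have hc : Continuous c := by fun_prop
  have hint : ∀ a b, IntervalIntegrable c volume a b := fun a b => hc.intervalIntegrable a b
  let P : ℝ → ℝ := fun x => ∫ t in (0 : ℝ)..x, c t
  have hP : ∀ x, HasDerivAt P (c x) x := fun x => (hc.integral_hasStrictDerivAt 0 x).hasDerivAt
  have hsub : ∀ a b, P b - P a = ∫ t in a..b, c t := fun a b =>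
    intervalIntegral.integral_interval_sub_left (hint _ _) (hint _ _)
  refine ⟨fun x => (P (x + κ) - P (x - κ)) / (2 * κ),
    fun x => (c (x + κ) - c (x - κ)) / (2 * κ), ?_, ?_, ?_, ?_, ?_⟩
  · intro x
    have h1 := (hP (x + κ)).comp_add_const x κ
    have h2 := (hP (x - κ)).comp_sub_const x κ
    exact (h1.sub h2).div_const _
  · intro x
    have h1 : c (x - κ) ≤ c (x + κ) := by
      apply max_le_max le_rfl
      apply min_le_min _ le_rfl
      linarith
    have h2 : c (x + κ) - c (x - κ) ≤ 2 * κ := by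
      simp only [c]
      rcases max_cases (-1) (min (x + κ) 1) with h | h <;>
      rcases max_cases (-1) (min (x - κ) 1) with h' | h' <;>
      rcases min_cases (x + κ) 1 with h3 | h3 <;>
      rcases min_cases (x - κ) 1 with h4 | h4 <;> linarith
    rw [abs_of_nonneg (by apply div_nonneg <;> linarith)]
    rw [div_le_one (by linarith)]
    exact h2
  · intro x
    have hle : x - κ ≤ x + κ := by linarith
    have h1 : (∫ t in (x - κ)..(x + κ), c t) ≤ ∫ t in (x - κ)..(x + κ), (1 : ℝ) :=
      intervalIntegral.integral_mono_on hle (hint _ _) (by simp) (fun t _ => by simp [c])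
    have h2 : (∫ t in (x - κ)..(x + κ), (-1 : ℝ)) ≤ ∫ t in (x - κ)..(x + κ), c t :=
      intervalIntegral.integral_mono_on hle (by simp) (hint _ _) (fun t _ => by simp [c])
    simp only [intervalIntegral.integral_const, smul_eq_mul] at h1 h2
    simp only [hsub]
    constructor
    · rw [le_div_iff₀ (by linarith)]; linarith
    · rw [div_le_iff₀ (by linarith)]; linarith
  · intro x hx
    have hle : x - κ ≤ x + κ := by linarith
    have h1 : (∫ t in (x - κ)..(x + κ), c t) = ∫ t in (x - κ)..(x + κ), (1 : ℝ) := by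
      apply intervalIntegral.integral_congr
      intro t ht
      rw [uIcc_of_le hle] at ht
      have : 1 ≤ t := by linarith [ht.1]
      simp [c, this]
    simp only [hsub, h1, intervalIntegral.integral_const, smul_eq_mul]
    field_simp; ring
  · intro x hx
    have hle : x - κ ≤ x + κ := by linarith
    have h1 : (∫ t in (x - κ)..(x + κ), c t) = ∫ t in (x - κ)..(x + κ), (-1 : ℝ) := by
      apply intervalIntegral.integral_congr
      intro t ht
      rw [uIcc_of_le hle] at ht
      have : t ≤ -1 := by linarith [ht.2]
      simp only [c]
      rw [min_eq_left (by linarith), max_eq_left this]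
    simp only [hsub, h1, intervalIntegral.integral_const, smul_eq_mul]
    field_simp; ring

/-- Inward pointing (after a sign change) directions. -/
def InwardAt {E : Type*} [NormedAddCommGroup E] [NormedSpace ℝ E] (Ω : Set E) (z v : E) : Prop :=
  ∀ᶠ q : E × ℝ × E in nhds (z, 0, v), q.1 ∈ closure Ω → 0 < q.2.1 → q.1 - q.2.1 • q.2.2 ∈ Ω

lemma InwardAt.eventually {E : Type*} [NormedAddCommGroup E] [NormedSpace ℝ E] {Ω : Set E}
    {z v : E} (h : InwardAt Ω z v) : ∀ᶠ y in nhds z, InwardAt Ω y v := by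
  have h1 := Filter.Eventually.eventually_nhds h
  have h2 : Tendsto (fun y : E => ((y, 0, v) : E × ℝ × E)) (nhds z) (nhds (z, 0, v)) :=
    Continuous.tendsto (by fun_prop) z
  exact h2.eventually h1

lemma InwardAt.of_mem {E : Type*} [NormedAddCommGroup E] [NormedSpace ℝ E] {Ω : Set E}
    (hΩ : IsOpen Ω) {z : E} (hz : z ∈ Ω) (v : E) : InwardAt Ω z v := by
  have h2 : Tendsto (fun q : E × ℝ × E => q.1 - q.2.1 • q.2.2) (nhds (z, 0, v)) (nhds z) := by
    have : Continuous (fun q : E × ℝ × E => q.1 - q.2.1 • q.2.2) := by fun_prop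
    simpa using this.tendsto (z, 0, v)
  filter_upwards [h2.eventually (hΩ.mem_nhds hz)] with q hq _ _ using hq

lemma InwardAt.convex {E : Type*} [NormedAddCommGroup E] [NormedSpace ℝ E] {Ω : Set E}
    (z : E) : Convex ℝ {v | InwardAt Ω z v} := by
  rw [convex_iff_forall_pos]
  intro v1 h1 v2 h2 a b ha hb hab
  simp only [Set.mem_ofPred_eq] at h1 h2 ⊢
  set v := a • v1 + b • v2 with hv
  have t1 : Tendsto (fun q : E × ℝ × E => ((q.1, a * q.2.1, v1 + (q.2.2 - v)) : E × ℝ × E))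
      (nhds (z, 0, v)) (nhds (z, 0, v1)) := by
    have : Continuous (fun q : E × ℝ × E => ((q.1, a * q.2.1, v1 + (q.2.2 - v)) : E × ℝ × E)) := by
      fun_prop
    simpa using this.tendsto (z, 0, v)
  have t2 : Tendsto (fun q : E × ℝ × E =>
      ((q.1 - (a * q.2.1) • (v1 + (q.2.2 - v)), b * q.2.1, v2 + (q.2.2 - v)) : E × ℝ × E))
      (nhds (z, 0, v)) (nhds (z, 0, v2)) := by
    have : Continuous (fun q : E × ℝ × E =>
      ((q.1 - (a * q.2.1) • (v1 + (q.2.2 - v)), b * q.2.1, v2 + (q.2.2 - v)) : E × ℝ × E)) := by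
      fun_prop
    simpa using this.tendsto (z, 0, v)
  filter_upwards [t1.eventually h1, t2.eventually h2] with q hq1 hq2 hc hpos
  have h3 := hq1 hc (mul_pos ha hpos)
  have h4 := hq2 (subset_closure h3) (mul_pos hb hpos)
  convert h4 using 1
  have e1 : q.2.2 = a • (v1 + (q.2.2 - v)) + b • (v2 + (q.2.2 - v)) := by
    have : a • (v1 + (q.2.2 - v)) + b • (v2 + (q.2.2 - v)) = (a + b) • (q.2.2 - v) + v := by
      rw [hv]; module
    rw [this, hab]; simp
  conv_lhs => rw [e1]
  module

/-- A boundary point with smooth defining function has an inward direction. -/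
lemma InwardAt.of_defining {E : Type*} [NormedAddCommGroup E] [InnerProductSpace ℝ E]
    [CompleteSpace E] {Ω U : Set E} {z : E} {f : E → ℝ} (hU : IsOpen U) (hz : z ∈ U)
    (hf : ContDiffOn ℝ (⊤ : ℕ∞) f U) (hneg : ∀ y ∈ U, (y ∈ Ω ↔ f y < 0))
    (hzero : ∀ y ∈ U, (y ∈ frontier Ω ↔ f y = 0)) (hg : gradient f z ≠ 0) :
    InwardAt Ω z (gradient f z) := by
  have hs : HasStrictFDerivAt f (fderiv ℝ f z) z :=
    (hf.contDiffAt (hU.mem_nhds hz)).hasStrictFDerivAt (by simp)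
  set v := gradient f z with hv
  have hvpos : 0 < ‖v‖ := norm_pos_iff.2 hg
  have hfd : ∀ y, fderiv ℝ f z y = inner ℝ v y := by
    intro y
    rw [hv]; simp [gradient]
  have hlo := hs.isLittleO.def (show (0 : ℝ) < ‖v‖ / 4 by positivity)
  have t1 : Tendsto (fun q : E × ℝ × E => ((q.1 - q.2.1 • q.2.2, q.1) : E × E))
      (nhds (z, 0, v)) (nhds (z, z)) := by
    have : Continuous (fun q : E × ℝ × E => ((q.1 - q.2.1 • q.2.2, q.1) : E × E)) := by fun_prop
    simpa using this.tendsto (z, 0, v)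
  have t2 : Tendsto (fun q : E × ℝ × E => q.2.2) (nhds (z, 0, v)) (nhds v) :=
    Continuous.tendsto (by fun_prop) (z, (0 : ℝ), v)
  have hU2 : ∀ᶠ p : E × E in nhds (z, z), p.1 ∈ U ∧ p.2 ∈ U :=
    (prod_mem_nhds (hU.mem_nhds hz) (hU.mem_nhds hz))
  filter_upwards [t1.eventually hlo, t1.eventually hU2,
    t2.eventually (Metric.ball_mem_nhds v (show (0 : ℝ) < ‖v‖ / 4 by positivity))]
    with q h1 h2 h3 hcl hpos
  rcases q with ⟨x, s, v'⟩
  simp only at h1 h2 h3 hcl hpos ⊢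
  have hfx : f x ≤ 0 := by
    by_cases hx : x ∈ Ω
    · exact ((hneg x h2.2).1 hx).le
    · refine le_of_eq ((hzero x h2.2).1 ⟨hcl, fun h => hx (interior_subset h)⟩)
  rw [hneg _ h2.1]
  have e : x - s • v' - x = -(s • v') := by abel
  rw [e, map_neg, map_smul, norm_neg, norm_smul, Real.norm_of_nonneg hpos.le, hfd,
    smul_eq_mul, Real.norm_eq_abs] at h1
  rw [dist_eq_norm] at h3
  have e2 : inner ℝ v v' = ‖v‖ ^ 2 + inner ℝ v (v' - v) := by
    rw [inner_sub_right, real_inner_self_eq_norm_sq]; ring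
  have e3 : |inner ℝ v (v' - v)| ≤ ‖v‖ * ‖v' - v‖ := abs_real_inner_le_norm _ _
  have e4 : ‖v'‖ ≤ ‖v‖ + ‖v' - v‖ := by
    have := norm_add_le v (v' - v); simpa using this
  have e5 := (abs_le.1 h1).2
  have e6 := (abs_le.1 e3).1
  have e7 : ‖v‖ * ‖v' - v‖ ≤ ‖v‖ * (‖v‖ / 4) := by gcongr
  have e8 : ‖v‖ / 4 * ‖v'‖ ≤ ‖v‖ / 4 * (‖v‖ + ‖v‖ / 4) := by gcongr; linarith
  have e9 : 0 < inner ℝ v v' - ‖v‖ / 4 * ‖v'‖ := by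
    rw [e2]; nlinarith
  have := mul_pos hpos e9
  nlinarith

lemma exists_field {n : ℕ} (Ω : Set (EuclideanSpace ℝ (Fin n))) (hΩo : IsOpen Ω)
    (hΩb : Bornology.IsBounded Ω) (hΩs : HasSmoothBoundary Ω) :
    ∃ X : EuclideanSpace ℝ (Fin n) → EuclideanSpace ℝ (Fin n), ContDiff ℝ (⊤ : ℕ∞) X ∧
      ∃ s0 > 0, ∀ s : ℝ, 0 < s → s < s0 → ∀ x ∈ closure Ω, x - s • X x ∈ Ω := by
  obtain ⟨g, hg⟩ := exists_contMDiffMap_forall_mem_convex_of_local_const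
    (n := (⊤ : ℕ∞)) (modelWithCornersSelf ℝ (EuclideanSpace ℝ (Fin n)))
    (t := fun z => {v | z ∈ closure Ω → InwardAt Ω z v}) (by
      intro z
      by_cases hz : z ∈ closure Ω
      · simpa [hz] using InwardAt.convex (Ω := Ω) z
      · simpa [hz] using convex_univ) (by
      intro z
      by_cases hz : z ∈ closure Ω
      · have : ∃ v, InwardAt Ω z v := by
          by_cases hz' : z ∈ Ω
          · exact ⟨0, InwardAt.of_mem hΩo hz' 0⟩
          · obtain ⟨U, f, hU, hzU, hf, h1, h2, h3⟩ :=
              hΩs z ⟨hz, fun h => hz' (interior_subset h)⟩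
            exact ⟨_, InwardAt.of_defining hU hzU hf h1 h2 (h3 z hzU)⟩
        obtain ⟨v, hv⟩ := this
        exact ⟨v, hv.eventually.mono fun y hy _ => hy⟩
      · refine ⟨0, ?_⟩
        filter_upwards [isClosed_closure.isOpen_compl.mem_nhds hz] with y hy hy'
        exact absurd hy' hy)
  have hgc : ContDiff ℝ (⊤ : ℕ∞) g := g.contMDiff.contDiff
  refine ⟨g, hgc, ?_⟩
  have hcomp : IsCompact (closure Ω) := hΩb.isCompact_closure
  have key : ∀ᶠ s : ℝ in nhds 0, ∀ x ∈ closure Ω, 0 < s → x - s • g x ∈ Ω := by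
    have := hcomp.eventually_forall_of_forall_eventually (x₀ := (0 : ℝ))
      (P := fun s x => x ∈ closure Ω → 0 < s → x - s • g x ∈ Ω) ?_
    · filter_upwards [this] with s hs x hx using hs x hx hx
    · intro x hx
      have h1 := hg x hx
      have t : Tendsto (fun q : ℝ × EuclideanSpace ℝ (Fin n) => (q.2, q.1, g q.2))
          (nhds (0, x)) (nhds (x, 0, g x)) := by
        have : Continuous (fun q : ℝ × EuclideanSpace ℝ (Fin n) => (q.2, q.1, g q.2)) := by
          have := hgc.continuous
          fun_prop
        exact this.tendsto (0, x)
      exact t.eventually h1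
  obtain ⟨s0, hs0, hs⟩ := Metric.eventually_nhds_iff.1 key
  refine ⟨s0, hs0, fun s hs1 hs2 x hx => hs (y := s) ?_ x hx hs1⟩
  simpa [abs_of_pos hs1] using hs2

lemma exists_good_level {E : Type*} [NormedAddCommGroup E] [MeasurableSpace E] [BorelSpace E]
    (μ : Measure E) [SFinite μ] (w m : E → ℝ) (hw : Continuous w) (hm : Continuous m)
    (δ ρ : ℝ) (hδ1 : δ < 1) (hρ : 0 < ρ) :
    ∃ t ∈ Icc (-(1 - δ)) (1 - δ), μ {x | |w x - t| < ρ * m x} ≤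
      ENNReal.ofReal (ρ / (1 - δ)) * ∫⁻ x, ENNReal.ofReal (m x) ∂μ := by
  have hcont1 : Continuous (fun p : E × ℝ => |w p.1 - p.2|) := by fun_prop
  have hcont2 : Continuous (fun p : E × ℝ => ρ * m p.1) := by fun_prop
  have hS : MeasurableSet {p : E × ℝ | |w p.1 - p.2| < ρ * m p.1} := by
    have h1 : Measurable (fun p : E × ℝ => |w p.1 - p.2|) := by
      have := hw.measurable
      fun_prop
    have h2 : Measurable (fun p : E × ℝ => ρ * m p.1) := by
      have := hm.measurable
      fun_prop
    exact measurableSet_lt h1 h2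
  set f : ℝ → ENNReal := fun t => μ {x | |w x - t| < ρ * m x} with hf
  have hfm : Measurable f := measurable_measure_prodMk_right hS
  have htot : ∫⁻ t, f t = ENNReal.ofReal (2 * ρ) * ∫⁻ x, ENNReal.ofReal (m x) ∂μ := by
    have h1 := Measure.prod_apply_symm (μ := μ) (ν := (volume : Measure ℝ)) hS
    have h2 := Measure.prod_apply (μ := μ) (ν := (volume : Measure ℝ)) hS
    have h3 : ∫⁻ t, f t = ∫⁻ x, volume (Prod.mk x ⁻¹' {p : E × ℝ | |w p.1 - p.2| < ρ * m p.1}) ∂μ := by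
      rw [← h2, h1]; rfl
    rw [h3, ← lintegral_const_mul']
    · refine lintegral_congr fun x => ?_
      have : (Prod.mk x ⁻¹' {p : E × ℝ | |w p.1 - p.2| < ρ * m p.1}) = ball (w x) (ρ * m x) := by
        ext t
        simp [Real.dist_eq, abs_sub_comm]
      rw [this, Real.volume_ball, ← ENNReal.ofReal_mul (by positivity)]
      congr 1; ring
    · exact ENNReal.ofReal_ne_top
  have hvol : volume (Icc (-(1 - δ)) (1 - δ)) = ENNReal.ofReal (2 * (1 - δ)) := by
    rw [Real.volume_Icc]; congr 1; ring
  have hpos : 0 < 2 * (1 - δ) := by linarith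
  obtain ⟨t, ht, hle⟩ := exists_le_setLAverage (μ := (volume : Measure ℝ))
    (s := Icc (-(1 - δ)) (1 - δ)) (f := f) (by rw [hvol]; simpa using hδ1)
    (by rw [hvol]; exact ENNReal.ofReal_ne_top) hfm.aemeasurable
  refine ⟨t, ht, hle.trans ?_⟩
  rw [setLAverage_eq, hvol]
  calc _ ≤ (∫⁻ t, f t) / ENNReal.ofReal (2 * (1 - δ)) := by
        gcongr; exact Measure.restrict_le_self
    _ = _ := by
        rw [htot, div_eq_mul_inv, mul_right_comm, ← div_eq_mul_inv,
          ← ENNReal.ofReal_div_of_pos hpos]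
        congr 2
        field_simp

lemma energy_bound {n : ℕ} (Ω : Set (EuclideanSpace ℝ (Fin n))) (hΩo : IsOpen Ω)
    (hΩb : Bornology.IsBounded Ω) (w : EuclideanSpace ℝ (Fin n) → ℝ) (hw : ContDiff ℝ 2 w)
    (κ η δ : ℝ) (hκ : 0 < κ) (hη : 0 < η) (hδ : 0 < δ) (hδ1 : δ < 1) :
    ∃ ε0 > 0, ∀ ε : ℝ, 0 < ε → ε < ε0 → ∃ v : EuclideanSpace ℝ (Fin n) → ℝ,
      (∀ x, v x ∈ Icc (-1 : ℝ) 1) ∧ Continuous v ∧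
      (∀ x ∈ Ω, ∀ y : ℝ, |y| = 1 → |v x - y| ≤ 4 / δ * |w x - y|) ∧
      Jeps Ω ε v ≤ ENNReal.ofReal (((1 + κ) ^ 2 + 1) * (1 + κ) / (1 - δ)) *
        ∫⁻ x in Ω, ENNReal.ofReal (√(‖gradient w x‖ ^ 2 + η ^ 2)) := by
  obtain ⟨ψ, ψ', hψd, hψ1, hψr, hψp, hψn⟩ := exists_profile κ hκ
  set m : EuclideanSpace ℝ (Fin n) → ℝ := fun x => √(‖gradient w x‖ ^ 2 + η ^ 2) with hm
  have hgr : ContDiff ℝ 1 (gradient w) := by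
    have h1 : ContDiff ℝ 1 (fderiv ℝ w) := hw.fderiv_right (by norm_num)
    exact (InnerProductSpace.toDual ℝ (EuclideanSpace ℝ (Fin n))).symm.toContinuousLinearEquiv.contDiff.comp h1
  have hmc : ContDiff ℝ 1 m := by
    refine ContDiff.sqrt (by have := hgr.norm_sq ℝ; fun_prop) (fun x => ?_)
    positivity
  have hmη : ∀ x, η ≤ m x := fun x => Real.le_sqrt_of_sq_le (by nlinarith [sq_nonneg ‖gradient w x‖])
  have hmpos : ∀ x, 0 < m x := fun x => hη.trans_le (hmη x)
  have hnorm : ∀ (f : EuclideanSpace ℝ (Fin n) → ℝ) x, ‖gradient f x‖ = ‖fderiv ℝ f x‖ := by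
    intro f x; simp [gradient]
  have hmg : ∀ x, ‖fderiv ℝ w x‖ ≤ m x := fun x => by
    rw [← hnorm]
    exact Real.le_sqrt_of_sq_le (by nlinarith [sq_nonneg η])
  obtain ⟨C1, hC1⟩ := hΩb.isCompact_closure.exists_bound_of_continuousOn
    (hmc.continuous_fderiv (by simp)).continuousOn
  obtain ⟨C2, hC2⟩ := hΩb.isCompact_closure.exists_bound_of_continuousOn hmc.continuous.continuousOn
  set C : ℝ := max (max C1 C2) 1 with hC
  have hCpos : 0 < C := lt_of_lt_of_le one_pos (le_max_right _ _)
  have hb1 : ∀ x ∈ Ω, ‖fderiv ℝ m x‖ ≤ C := fun x hx =>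
    (hC1 x (subset_closure hx)).trans ((le_max_left _ _).trans (le_max_left _ _))
  have hb2 : ∀ x ∈ Ω, m x ≤ C := fun x hx =>
    (Real.le_norm_self _).trans <|
      (hC2 x (subset_closure hx)).trans ((le_max_right _ _).trans (le_max_left _ _))
  refine ⟨min (δ / (2 * (1 + κ) * C)) (κ * η / ((1 + κ) * C)), by positivity, ?_⟩
  intro ε hε hεlt
  have hε1 : (1 + κ) * ε * C ≤ δ / 2 := by
    have := (lt_min_iff.1 hεlt).1
    rw [lt_div_iff₀ (by positivity)] at this
    linarith
  have hε2 : (1 + κ) * ε * C ≤ κ * η := by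
    have := (lt_min_iff.1 hεlt).2
    rw [lt_div_iff₀ (by positivity)] at this
    linarith
  obtain ⟨t, ht, htle⟩ := exists_good_level (volume.restrict Ω) w m hw.continuous hmc.continuous
    δ ((1 + κ) * ε) hδ1 (by positivity)
  set k : EuclideanSpace ℝ (Fin n) → ℝ := fun x => (w x - t) / (ε * m x) with hk
  have hkd : Differentiable ℝ k := by
    have h1 := hw.differentiable (by simp)
    have h2 := hmc.differentiable (by simp)
    intro x
    have h3 : ε * m x ≠ 0 := by
      have := hmpos x
      positivity
    have h4 : DifferentiableAt ℝ (fun x => w x - t) x := by fun_prop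
    have h5 : DifferentiableAt ℝ (fun x => ε * m x) x := by fun_prop
    simp only [hk, div_eq_mul_inv]
    exact h4.fun_mul (h5.fun_inv h3)
  have hkabs : ∀ x, |k x| = |w x - t| / (ε * m x) := fun x => by
    have := hmpos x
    simp only [hk]
    rw [abs_div, abs_of_pos (by positivity : 0 < ε * m x)]
  have hprod : ∀ x, (ε * m x) • fderiv ℝ k x + (k x * ε) • fderiv ℝ m x = fderiv ℝ w x := by
    intro x
    have h1 := (hkd x).hasFDerivAt
    have h2 := ((hmc.differentiable (by simp)) x).hasFDerivAt.const_mul ε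
    have h3 := h1.mul h2
    have h4 : (k * fun x => ε * m x) = fun x => w x - t := by
      funext y
      have := hmpos y
      simp only [hk, Pi.mul_apply]
      field_simp
    rw [h4] at h3
    have h5 := ((hw.differentiable (by simp)) x).hasFDerivAt.sub_const t
    rw [← h3.unique h5, smul_smul, add_comm]
  have hDk : ∀ x ∈ Ω, |k x| ≤ 1 + κ → ‖fderiv ℝ k x‖ ≤ (1 + κ) / ε := by
    intro x hx hkx
    have hmx := hmpos x
    have h1 : (ε * m x) • fderiv ℝ k x = fderiv ℝ w x - (k x * ε) • fderiv ℝ m x := by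
      rw [← hprod x]; abel
    have h2 : (ε * m x) * ‖fderiv ℝ k x‖ ≤ m x + (1 + κ) * ε * C := by
      calc (ε * m x) * ‖fderiv ℝ k x‖ = ‖(ε * m x) • fderiv ℝ k x‖ := by
            rw [norm_smul, Real.norm_of_nonneg (by positivity)]
        _ ≤ ‖fderiv ℝ w x‖ + ‖(k x * ε) • fderiv ℝ m x‖ := by rw [h1]; exact norm_sub_le _ _
        _ ≤ m x + (1 + κ) * ε * C := by
            rw [norm_smul, norm_mul, Real.norm_eq_abs, Real.norm_of_nonneg hε.le]
            gcongr
            · exact hmg x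
            · exact hb1 x hx
    have h3 : κ * η ≤ κ * m x := by gcongr; exact hmη x
    rw [le_div_iff₀ hε]
    have h4 : m x * (‖fderiv ℝ k x‖ * ε) ≤ m x * (1 + κ) := by nlinarith
    exact le_of_mul_le_mul_left h4 hmx
  have hout : ∀ y, 1 + κ ≤ |y| → |ψ y| = 1 ∧ ψ' y = 0 := by
    intro y hy
    rcases le_abs.1 hy with h | h
    · have h1 := hψp y h
      refine ⟨by simp [h1], IsLocalMax.hasDerivAt_eq_zero (f := ψ) ?_ (hψd y)⟩
      exact Eventually.of_forall fun z => by rw [h1]; exact (hψr z).2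
    · have h1 := hψn y (by linarith)
      refine ⟨by simp [h1], IsLocalMin.hasDerivAt_eq_zero (f := ψ) ?_ (hψd y)⟩
      exact Eventually.of_forall fun z => by rw [h1]; exact (hψr z).1
  have hvd : ∀ x, HasFDerivAt (fun x => ψ (k x)) (ψ' (k x) • fderiv ℝ k x) x := fun x =>
    (hψd (k x)).comp_hasFDerivAt x (hkd x).hasFDerivAt
  have hvdiff : Differentiable ℝ (fun x => ψ (k x)) := fun x => (hvd x).differentiableAt
  refine ⟨fun x => ψ (k x), fun x => hψr _, hvdiff.continuous, ?_, ?_⟩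
  · intro x hx y hy
    change |ψ (k x) - y| ≤ _
    have hmx := hmpos x
    have hem : (1 + κ) * ε * m x ≤ δ / 2 := by
      refine le_trans ?_ hε1
      have := hb2 x hx
      gcongr
    have hr := hψr (k x)
    have fin : ∀ d : ℝ, δ / 2 ≤ d → 2 ≤ 4 / δ * d := by
      intro d hd
      calc (2 : ℝ) = 4 / δ * (δ / 2) := by field_simp; norm_num
        _ ≤ _ := by gcongr
    rcases (abs_eq one_pos.le).1 hy with rfl | rfl
    · by_cases h : 1 + κ ≤ k x
      · rw [hψp _ h]; simp only [sub_self, abs_zero]; positivity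
      · push Not at h
        have h2 : w x - t < (1 + κ) * ε * m x := by
          simp only [hk] at h
          rw [div_lt_iff₀ (by positivity)] at h
          linarith
        have h3 : δ / 2 ≤ |w x - 1| := by
          rw [abs_sub_comm]
          exact le_trans (by linarith [ht.2]) (le_abs_self _)
        refine le_trans ?_ (fin _ h3)
        rw [abs_le]; constructor <;> linarith [hr.1, hr.2]
    · by_cases h : k x ≤ -(1 + κ)
      · rw [hψn _ h]; simp only [sub_self, abs_zero]; positivity
      · push Not at h
        have h2 : -((1 + κ) * ε * m x) < w x - t := by
          simp only [hk] at h
          rw [lt_div_iff₀ (by positivity)] at h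
          linarith
        have h3 : δ / 2 ≤ |w x - -1| :=
          le_trans (by linarith [ht.1]) (le_abs_self _)
        refine le_trans ?_ (fin _ h3)
        rw [abs_le]; constructor <;> linarith [hr.1, hr.2]
  · unfold Jeps
    rw [if_pos hvdiff.differentiableOn]
    set S := {x | |w x - t| < (1 + κ) * ε * m x} with hS
    have hSm : MeasurableSet S :=
      (isOpen_lt (by have := hw.continuous; fun_prop) (by have := hmc.continuous; fun_prop)).measurableSet
    set A : ℝ := ((1 + κ) ^ 2 + 1) / ε with hA
    have hpt : ∀ x ∈ Ω, ENNReal.ofReal (ε * ‖gradient (fun x => ψ (k x)) x‖ ^ 2 +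
        (if |ψ (k x)| < 1 then (1 : ℝ) else 0) / ε) ≤ S.indicator (fun _ => ENNReal.ofReal A) x := by
      intro x hx
      have hmx := hmpos x
      rw [hnorm, (hvd x).fderiv]
      by_cases hxS : x ∈ S
      · rw [indicator_of_mem hxS]
        apply ENNReal.ofReal_le_ofReal
        have hkx : |k x| ≤ 1 + κ := by
          rw [hkabs, div_le_iff₀ (by positivity)]
          have : |w x - t| < (1 + κ) * ε * m x := hxS
          linarith
        have h1 : ‖ψ' (k x) • fderiv ℝ k x‖ ≤ (1 + κ) / ε := by
          rw [norm_smul, Real.norm_eq_abs]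
          calc _ ≤ 1 * ‖fderiv ℝ k x‖ := by gcongr; exact hψ1 _
            _ ≤ _ := by rw [one_mul]; exact hDk x hx hkx
        have h2 : (if |ψ (k x)| < 1 then (1 : ℝ) else 0) ≤ 1 := by split_ifs <;> norm_num
        calc _ ≤ ε * ((1 + κ) / ε) ^ 2 + 1 / ε := by gcongr
          _ = A := by rw [hA]; field_simp
      · have hkx : 1 + κ ≤ |k x| := by
          rw [hkabs, le_div_iff₀ (by positivity)]
          have : ¬ |w x - t| < (1 + κ) * ε * m x := hxS
          linarith
        obtain ⟨h1, h2⟩ := hout _ hkx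
        simp [h1, h2]
    calc _ ≤ ∫⁻ x in Ω, S.indicator (fun _ => ENNReal.ofReal A) x :=
          setLIntegral_mono' hΩo.measurableSet hpt
      _ = ENNReal.ofReal A * (volume.restrict Ω) S := lintegral_indicator_const hSm _
      _ ≤ ENNReal.ofReal A * (ENNReal.ofReal ((1 + κ) * ε / (1 - δ)) *
            ∫⁻ x in Ω, ENNReal.ofReal (m x)) := by gcongr
      _ = _ := by
          rw [← mul_assoc, ← ENNReal.ofReal_mul (by positivity)]
          congr 2
          rw [hA]; field_simp

lemma fderiv_convolution_apply {E F : Type*} [NormedAddCommGroup E] [NormedSpace ℝ E]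
    [FiniteDimensional ℝ E] [MeasurableSpace E] [BorelSpace E] [NormedAddCommGroup F]
    [NormedSpace ℝ F] [CompleteSpace F] (μ : Measure E) [μ.IsAddHaarMeasure]
    (ρ : E → ℝ) (hρc : HasCompactSupport ρ)
    (hρ1 : ContDiff ℝ 1 ρ) (g : E → F) (hg : LocallyIntegrable g μ)
    (Λ : (E →L[ℝ] F) →L[ℝ] ℝ) (x : E) :
    Λ (fderiv ℝ (convolution ρ g (ContinuousLinearMap.lsmul ℝ ℝ) μ) x) =
      ∫ y, Λ ((fderiv ℝ ρ (x - y)).smulRight (g y)) ∂μ := by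
  have h1 := (hρc.hasFDerivAt_convolution_left (ContinuousLinearMap.lsmul ℝ ℝ) hρ1 hg x).fderiv
  have hex := (hρc.fderiv (𝕜 := ℝ)).convolutionExists_left
    ((ContinuousLinearMap.lsmul ℝ ℝ : ℝ →L[ℝ] F →L[ℝ] F).precompL E)
      (hρ1.continuous_fderiv (by simp)) hg x
  have h2 := hex.integrable_swap
  rw [h1, convolution_eq_swap, ← ContinuousLinearMap.integral_comp_comm Λ h2]
  refine integral_congr_ae (Eventually.of_forall fun y => ?_)
  simp only
  congr 1

lemma exists_mollified {n : ℕ} (Ω : Set (EuclideanSpace ℝ (Fin n)))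
    (u0 : EuclideanSpace ℝ (Fin n) → ℝ) (hu0 : Integrable u0) (T : ℝ)
    (hT : ∀ g : EuclideanSpace ℝ (Fin n) → EuclideanSpace ℝ (Fin n),
      ContDiff ℝ 1 g → HasCompactSupport g → tsupport g ⊆ Ω → (∀ x, ‖g x‖ ≤ 1) →
      ∫ x, u0 x * divg g x ≤ T)
    (φ : ContDiffBump (0 : EuclideanSpace ℝ (Fin n)))
    (K K' : Set (EuclideanSpace ℝ (Fin n))) (hK : MeasurableSet K) (hK' : IsCompact K')
    (hKK : K ⊆ K') (hsub : cthickening φ.rOut K' ⊆ Ω) :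
    ∃ U : EuclideanSpace ℝ (Fin n) → ℝ, ContDiff ℝ (⊤ : ℕ∞) U ∧
      (∀ x, U x = ∫ y, φ.normed volume y * u0 (x - y)) ∧
      ∫⁻ x in K, ENNReal.ofReal ‖fderiv ℝ U x‖ ≤ ENNReal.ofReal T := by
  set ρ : EuclideanSpace ℝ (Fin n) → ℝ := φ.normed volume with hρ
  have hρc : HasCompactSupport ρ := φ.hasCompactSupport_normed
  have hρs : ContDiff ℝ (⊤ : ℕ∞) ρ := φ.contDiff_normed
  have hρ1 : ContDiff ℝ 1 ρ := φ.contDiff_normed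
  have hρd := hρ1.continuous_fderiv (by simp)
  have hρeven : ∀ x, ρ (-x) = ρ x := fun x => φ.normed_neg x
  have hdρ : ∀ x, fderiv ℝ ρ (-x) = - fderiv ℝ ρ x := by
    intro x
    have h2 : HasFDerivAt (fun y => ρ (-y)) (-fderiv ℝ ρ (-x)) x := by
      have := ((hρ1.differentiable (by simp)) (-x)).hasFDerivAt.comp x (hasFDerivAt_id x).neg
      convert! this using 1
      ext; simp
    have h1 : (fun y => ρ (-y)) = ρ := by funext y; rw [hρeven]
    rw [h1] at h2
    rw [h2.fderiv, neg_neg]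
  set U : EuclideanSpace ℝ (Fin n) → ℝ :=
    convolution ρ u0 (ContinuousLinearMap.lsmul ℝ ℝ) volume with hU
  have hUs : ContDiff ℝ (⊤ : ℕ∞) U :=
    hρc.contDiff_convolution_left _ hρs hu0.locallyIntegrable
  have hUd : ∀ x e, fderiv ℝ U x e = ∫ y, fderiv ℝ ρ (x - y) e * u0 y := by
    intro x e
    have := fderiv_convolution_apply volume ρ hρc hρ1 u0 hu0.locallyIntegrable
      (ContinuousLinearMap.apply ℝ ℝ e) x
    simpa using this
  refine ⟨U, hUs, fun x => ?_, ?_⟩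
  · simp [hU, convolution_def]
  have hgc : Continuous (gradient U) :=
    (InnerProductSpace.toDual ℝ (EuclideanSpace ℝ (Fin n))).symm.continuous.comp
      (hUs.continuous_fderiv (by simp))
  have hgn : ∀ x, ‖gradient U x‖ = ‖fderiv ℝ U x‖ := fun x => by simp [gradient]
  set G : EuclideanSpace ℝ (Fin n) → EuclideanSpace ℝ (Fin n) :=
    K.indicator (fun x => -(‖gradient U x‖⁻¹ • gradient U x)) with hG
  have hGm : Measurable G := by
    have := hgc.measurable
    exact Measurable.indicator (by fun_prop) hK
  have hG1 : ∀ x, ‖G x‖ ≤ 1 := by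
    intro x
    by_cases hx : x ∈ K
    · simp only [hG, indicator_of_mem hx, norm_neg, norm_smul, norm_inv, norm_norm]
      exact inv_mul_le_one
    · simp [hG, hx]
  have hKfin : volume K < ⊤ := (measure_mono hKK).trans_lt hK'.measure_lt_top
  have hGint : Integrable G := by
    rw [hG, integrable_indicator_iff hK]
    refine Measure.integrableOn_of_bounded (M := 1) hKfin.ne ?_ ?_
    · have := hgc.measurable
      exact Measurable.aestronglyMeasurable (by fun_prop)
    · refine Eventually.of_forall fun x => ?_
      simp only [norm_neg, norm_smul, norm_inv, norm_norm]
      exact inv_mul_le_one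
  have hGU : ∀ x, fderiv ℝ U x (G x) = - K.indicator (fun x => ‖fderiv ℝ U x‖) x := by
    intro x
    by_cases hx : x ∈ K
    · simp only [hG, indicator_of_mem hx, map_neg, map_smul, smul_eq_mul]
      have h1 : fderiv ℝ U x (gradient U x) = ‖gradient U x‖ ^ 2 := by
        rw [← real_inner_self_eq_norm_sq]
        conv_rhs => rw [gradient]
        rw [InnerProductSpace.toDual_symm_apply]
        rfl
      rw [h1, ← hgn]
      by_cases h0 : ‖gradient U x‖ = 0
      · simp [h0]
      · field_simp
    · simp [hG, hx]
  set H : EuclideanSpace ℝ (Fin n) → EuclideanSpace ℝ (Fin n) :=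
    convolution ρ G (ContinuousLinearMap.lsmul ℝ ℝ) volume with hH
  have hH1 : ContDiff ℝ 1 H :=
    hρc.contDiff_convolution_left (n := 1) _ hρ1 hGint.locallyIntegrable
  have hHdiv : ∀ y, divg H y = ∫ x, fderiv ℝ ρ (y - x) (G x) := by
    intro y
    have := fderiv_convolution_apply volume ρ hρc hρ1 G hGint.locallyIntegrable
      (∑ i : Fin n, (EuclideanSpace.proj (𝕜 := ℝ) i).comp
        (ContinuousLinearMap.apply ℝ (EuclideanSpace ℝ (Fin n)) (EuclideanSpace.single i (1 : ℝ)))) y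
    rw [← hH] at this
    have h2 : divg H y = (∑ i : Fin n, (EuclideanSpace.proj (𝕜 := ℝ) i).comp
        (ContinuousLinearMap.apply ℝ (EuclideanSpace ℝ (Fin n))
          (EuclideanSpace.single i (1 : ℝ)))) (fderiv ℝ H y) := by
      simp [divg]
    rw [h2, this]
    refine integral_congr_ae (Eventually.of_forall fun x => ?_)
    beta_reduce
    conv_rhs => rw [← (EuclideanSpace.basisFun (Fin n) ℝ).sum_repr (G x)]
    simp [map_sum, mul_comm]
  have hHn : ∀ y, ‖H y‖ ≤ 1 := by
    intro y
    rw [hH, convolution_lsmul_swap]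
    have hi : Integrable (fun x => ρ (y - x)) := (φ.integrable_normed).comp_sub_left y
    calc _ ≤ ∫ x, ρ (y - x) := by
          refine norm_integral_le_of_norm_le hi (Eventually.of_forall fun x => ?_)
          rw [norm_smul, Real.norm_of_nonneg (φ.nonneg_normed _)]
          exact mul_le_of_le_one_right (φ.nonneg_normed _) (hG1 x)
      _ = 1 := by
          rw [integral_sub_left_eq_self ρ volume y]
          exact φ.integral_normed
  have hHs : tsupport H ⊆ cthickening φ.rOut K' := by
    refine closure_minimal ?_ isClosed_cthickening
    intro y hy
    by_contra hcon
    apply hy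
    rw [hH, convolution_lsmul_swap]
    refine integral_eq_zero_of_ae (Eventually.of_forall fun x => ?_)
    by_cases hx : x ∈ K
    · have : ρ (y - x) = 0 := by
        by_contra hne
        have h1 : y - x ∈ Function.support (φ.normed volume) := hne
        rw [φ.support_normed_eq, mem_ball_zero_iff] at h1
        exact hcon (mem_cthickening_of_dist_le y x φ.rOut K' (hKK hx)
          (by rw [dist_eq_norm]; exact h1.le))
      simp [this]
    · simp [hG, hx]
  have hHc : HasCompactSupport H := hK'.cthickening.of_isClosed_subset (isClosed_tsupport _) hHs
  have main := hT H hH1 hHc (hHs.trans hsub) hHn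
  -- Fubini
  obtain ⟨C, hC⟩ := hρd.bounded_above_of_compact_support (hρc.fderiv (𝕜 := ℝ))
  have hFub : Integrable (Function.uncurry fun y x => u0 y * fderiv ℝ ρ (y - x) (G x))
      (volume.prod volume) := by
    have hb := (hu0.norm.mul_prod hGint.norm).const_mul C
    refine hb.mono' ?_ ?_
    · refine AEStronglyMeasurable.mul hu0.aestronglyMeasurable.comp_fst ?_
      apply Measurable.aestronglyMeasurable
      have h1 : Measurable fun p : EuclideanSpace ℝ (Fin n) × EuclideanSpace ℝ (Fin n) =>
          fderiv ℝ ρ (p.1 - p.2) := by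
        have := hρd.measurable
        fun_prop
      have h2 : Measurable fun p : EuclideanSpace ℝ (Fin n) × EuclideanSpace ℝ (Fin n) =>
          G p.2 := by fun_prop
      have h3 : Continuous fun q : (EuclideanSpace ℝ (Fin n) →L[ℝ] ℝ) × EuclideanSpace ℝ (Fin n) =>
          q.1 q.2 := by fun_prop
      exact h3.measurable.comp (h1.prodMk h2)
    · refine Eventually.of_forall fun p => ?_
      simp only [Function.uncurry, norm_mul]
      calc ‖u0 p.1‖ * ‖fderiv ℝ ρ (p.1 - p.2) (G p.2)‖ ≤ ‖u0 p.1‖ * (C * ‖G p.2‖) := by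
            gcongr
            exact (fderiv ℝ ρ (p.1 - p.2)).le_of_opNorm_le (hC _) _
        _ = _ := by ring
  have hswap : ∫ y, u0 y * divg H y = ∫ x in K, ‖fderiv ℝ U x‖ := by
    calc ∫ y, u0 y * divg H y = ∫ y, ∫ x, u0 y * fderiv ℝ ρ (y - x) (G x) := by
          refine integral_congr_ae (Eventually.of_forall fun y => ?_)
          simp only [hHdiv]
          rw [← integral_const_mul]
      _ = ∫ x, ∫ y, u0 y * fderiv ℝ ρ (y - x) (G x) := integral_integral_swap hFub
      _ = ∫ x, K.indicator (fun x => ‖fderiv ℝ U x‖) x := by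
          refine integral_congr_ae (Eventually.of_forall fun x => ?_)
          simp only
          rw [← neg_neg (K.indicator _ x), ← hGU, hUd, ← integral_neg]
          refine integral_congr_ae (Eventually.of_forall fun y => ?_)
          simp only
          have : y - x = -(x - y) := by abel
          rw [this, hdρ]
          simp [mul_comm]
      _ = _ := integral_indicator hK
  rw [hswap] at main
  have hint : IntegrableOn (fun x => ‖fderiv ℝ U x‖) K :=
    ((hUs.continuous_fderiv (by simp)).norm.continuousOn.integrableOn_compact hK').mono_set hKK
  rw [← ofReal_integral_eq_lintegral_ofReal hint (Eventually.of_forall fun x => norm_nonneg _)]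
  exact ENNReal.ofReal_le_ofReal main

lemma near_identity_L1 {E : Type*} [NormedAddCommGroup E] [NormedSpace ℝ E]
    [FiniteDimensional ℝ E] [MeasurableSpace E] [BorelSpace E] (μ : Measure E) [μ.IsAddHaarMeasure]
    (Ω : Set E) (hΩ : μ Ω ≠ ⊤) (u0 : E → ℝ) (hu0 : Integrable u0 μ) (δ : ℝ) (hδ : 0 < δ) :
    ∃ η > 0, ∀ T : E → E, (∀ x ∈ Ω, dist (T x) x ≤ η) → MeasurableSet Ω →
      (∀ F : E → ENNReal, ∫⁻ x in Ω, F (T x) ∂μ ≤ 2 * ∫⁻ x, F x ∂μ) →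
      ∫⁻ x in Ω, ‖u0 (T x) - u0 x‖ₑ ∂μ ≤ ENNReal.ofReal δ := by
  obtain ⟨f, hfc, hfle, hfcont, hfint⟩ := hu0.exists_hasCompactSupport_lintegral_sub_le
    (ε := ENNReal.ofReal (δ / 6)) (by simpa using hδ)
  have huc := hfc.uniformContinuous_of_continuous hfcont
  set V := (μ Ω).toReal with hV
  have hVn : 0 ≤ V := ENNReal.toReal_nonneg
  obtain ⟨η, hη, h⟩ := Metric.uniformContinuous_iff.1 huc (δ / (2 * (V + 1))) (by positivity)
  refine ⟨η / 2, by positivity, fun T hT hm hF => ?_⟩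
  have hpt : ∀ x ∈ Ω, ‖u0 (T x) - u0 x‖ₑ ≤ ‖u0 (T x) - f (T x)‖ₑ +
      (ENNReal.ofReal (δ / (2 * (V + 1))) + ‖u0 x - f x‖ₑ) := by
    intro x hx
    have h1 : u0 (T x) - u0 x = (u0 (T x) - f (T x)) + ((f (T x) - f x) + -(u0 x - f x)) := by ring
    rw [h1]
    refine (enorm_add_le _ _).trans ?_
    gcongr
    refine (enorm_add_le _ _).trans ?_
    rw [enorm_neg]
    gcongr
    rw [← ofReal_norm]
    apply ENNReal.ofReal_le_ofReal
    have := h (a := T x) (b := x) ((hT x hx).trans_lt (by linarith))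
    rw [dist_eq_norm] at this
    exact this.le
  have hmeas : AEMeasurable (fun x => ‖u0 x - f x‖ₑ) (μ.restrict Ω) :=
    ((hu0.sub hfint).aestronglyMeasurable.enorm).restrict
  have hmeas2 : AEMeasurable (fun x => ENNReal.ofReal (δ / (2 * (V + 1))) + ‖u0 x - f x‖ₑ)
      (μ.restrict Ω) := aemeasurable_const.add hmeas
  calc _ ≤ ∫⁻ x in Ω, (‖u0 (T x) - f (T x)‖ₑ +
      (ENNReal.ofReal (δ / (2 * (V + 1))) + ‖u0 x - f x‖ₑ)) ∂μ := setLIntegral_mono' hm hpt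
    _ = ∫⁻ x in Ω, ‖u0 (T x) - f (T x)‖ₑ ∂μ + (ENNReal.ofReal (δ / (2 * (V + 1))) * μ Ω +
        ∫⁻ x in Ω, ‖u0 x - f x‖ₑ ∂μ) := by
        rw [lintegral_add_right' _ hmeas2, lintegral_add_right' _ hmeas,
          setLIntegral_const]
    _ ≤ 2 * ENNReal.ofReal (δ / 6) + (ENNReal.ofReal (δ / 2) + ENNReal.ofReal (δ / 6)) := by
        gcongr
        · exact (hF fun x => ‖u0 x - f x‖ₑ).trans (by gcongr)
        · rw [← ENNReal.ofReal_toReal hΩ, ← ENNReal.ofReal_mul (by positivity)]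
          apply ENNReal.ofReal_le_ofReal
          rw [← hV, div_mul_eq_mul_div, div_le_iff₀ (by positivity)]
          nlinarith
        · exact (lintegral_mono' Measure.restrict_le_self le_rfl).trans hfle
    _ = ENNReal.ofReal δ := by
        rw [show (2 : ENNReal) = ENNReal.ofReal 2 by simp, ← ENNReal.ofReal_mul (by norm_num),
          ← ENNReal.ofReal_add (by positivity) (by positivity),
          ← ENNReal.ofReal_add (by positivity) (by positivity)]
        congr 1; ring

lemma near_identity {E : Type*} [NormedAddCommGroup E] [NormedSpace ℝ E]
    [FiniteDimensional ℝ E] [MeasurableSpace E] [BorelSpace E] (μ : Measure E) [μ.IsAddHaarMeasure]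
    (Ω : Set E) (hΩo : IsOpen Ω) (hΩb : Bornology.IsBounded Ω) (X : E → E) (hX : ContDiff ℝ 1 X)
    (c : ℝ) (hc : 1 < c) :
    ∃ s1 > 0, ∀ s : ℝ, 0 < s → s < s1 → MeasurableSet ((fun x => x - s • X x) '' Ω) ∧
      (∀ F : E → ENNReal, ∫⁻ x in Ω, F (x - s • X x) ∂μ ≤
        ENNReal.ofReal c * ∫⁻ y in (fun x => x - s • X x) '' Ω, F y ∂μ) ∧
      (∀ x ∈ Ω, ‖fderiv ℝ (fun x => x - s • X x) x‖ ≤ c) ∧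
      (∀ x ∈ Ω, ‖s • X x‖ ≤ c - 1) := by
  obtain ⟨R, hR⟩ := hΩb.subset_closedBall 0
  have hcomp : IsCompact (closedBall (0 : E) R) := isCompact_closedBall 0 R
  obtain ⟨C1, hC1⟩ := hcomp.exists_bound_of_continuousOn
    (hX.continuous_fderiv (by simp)).continuousOn
  obtain ⟨C2, hC2⟩ := hcomp.exists_bound_of_continuousOn hX.continuous.continuousOn
  set C : ℝ := max (max C1 C2) 1 with hC
  have hCpos : 0 < C := lt_of_lt_of_le one_pos (le_max_right _ _)
  have hb1 : ∀ x ∈ closedBall (0 : E) R, ‖fderiv ℝ X x‖ ≤ C := fun x hx =>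
    (hC1 x hx).trans ((le_max_left _ _).trans (le_max_left _ _))
  have hb2 : ∀ x ∈ closedBall (0 : E) R, ‖X x‖ ≤ C := fun x hx =>
    (hC2 x hx).trans ((le_max_right _ _).trans (le_max_left _ _))
  have hdet : ∀ᶠ A : E →L[ℝ] E in nhds (ContinuousLinearMap.id ℝ E), c⁻¹ < |A.det| := by
    have h1 : Continuous fun A : E →L[ℝ] E => |A.det| :=
      ContinuousLinearMap.continuous_det.abs
    apply h1.continuousAt.eventually_const_lt
    simpa [ContinuousLinearMap.det] using inv_lt_one_of_one_lt₀ hc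
  obtain ⟨κ, hκ, hdet⟩ := Metric.eventually_nhds_iff.1 hdet
  set τ := min κ (min 1 (c - 1)) with hτ
  have hτpos : 0 < τ := lt_min hκ (lt_min one_pos (by linarith))
  refine ⟨τ / C, by positivity, fun s hs hsl => ?_⟩
  have hsC : s * C < τ := by rwa [lt_div_iff₀ hCpos] at hsl
  have hsκ : s * C < κ := hsC.trans_le (min_le_left _ _)
  have hs1 : s * C < 1 := hsC.trans_le ((min_le_right _ _).trans (min_le_left _ _))
  have hsc : s * C < c - 1 := hsC.trans_le ((min_le_right _ _).trans (min_le_right _ _))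
  have hXd : Differentiable ℝ X := hX.differentiable (by simp)
  have hder : ∀ x, HasFDerivAt (fun x => x - s • X x)
      (ContinuousLinearMap.id ℝ E - s • fderiv ℝ X x) x := fun x =>
    (hasFDerivAt_id x).sub ((hXd x).hasFDerivAt.const_smul s)
  have hsn : ∀ x ∈ Ω, ‖s • fderiv ℝ X x‖ ≤ s * C := fun x hx => by
    rw [norm_smul, Real.norm_of_nonneg hs.le]
    gcongr
    exact hb1 x (hR hx)
  have hinj : InjOn (fun x => x - s • X x) Ω := by
    intro x hx y hy hxy
    simp only at hxy
    have h1 := (convex_closedBall (0 : E) R).norm_image_sub_le_of_norm_fderiv_le (𝕜 := ℝ) (f := X)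
      (fun z _ => hXd z) hb1 (hR hy) (hR hx)
    have h2 : x - y = s • (X x - X y) := by
      rw [smul_sub]
      have := sub_eq_zero.2 hxy
      rw [← sub_eq_zero, ← this]; abel
    have h3 : ‖x - y‖ ≤ (s * C) * ‖x - y‖ := by
      calc ‖x - y‖ = s * ‖X x - X y‖ := by
            conv_lhs => rw [h2]
            rw [norm_smul, Real.norm_of_nonneg hs.le]
        _ ≤ s * (C * ‖x - y‖) := by gcongr
        _ = _ := by ring
    have h4 : ‖x - y‖ = 0 := by
      have := norm_nonneg (x - y)
      nlinarith
    exact sub_eq_zero.1 (norm_eq_zero.1 h4)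
  have hcont : Continuous fun x => x - s • X x := by
    have := hX.continuous
    fun_prop
  refine ⟨hΩo.measurableSet.image_of_continuousOn_injOn hcont.continuousOn hinj, ?_, ?_, ?_⟩
  · intro F
    rw [lintegral_image_eq_lintegral_abs_det_fderiv_mul μ hΩo.measurableSet
      (fun x _ => (hder x).hasFDerivWithinAt) hinj F,
      ← lintegral_const_mul' _ _ ENNReal.ofReal_ne_top]
    refine setLIntegral_mono' hΩo.measurableSet fun x hx => ?_
    have h1 : c⁻¹ < |(ContinuousLinearMap.id ℝ E - s • fderiv ℝ X x).det| := by
      apply hdet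
      rw [dist_eq_norm]
      have : ContinuousLinearMap.id ℝ E - s • fderiv ℝ X x - ContinuousLinearMap.id ℝ E =
        -(s • fderiv ℝ X x) := by abel
      rw [this, norm_neg]
      exact (hsn x hx).trans_lt hsκ
    rw [← mul_assoc, ← ENNReal.ofReal_mul (by linarith)]
    have h2 : 1 ≤ c * |(ContinuousLinearMap.id ℝ E - s • fderiv ℝ X x).det| := by
      rw [inv_lt_iff_one_lt_mul₀ (by linarith)] at h1
      linarith
    calc F (x - s • X x) = 1 * F (x - s • X x) := (one_mul _).symm
      _ ≤ _ := by
        gcongr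
        rw [← ENNReal.ofReal_one]
        exact ENNReal.ofReal_le_ofReal h2
  · intro x hx
    rw [(hder x).fderiv]
    calc _ ≤ ‖ContinuousLinearMap.id ℝ E‖ + ‖s • fderiv ℝ X x‖ := norm_sub_le _ _
      _ ≤ 1 + s * C := add_le_add ContinuousLinearMap.norm_id_le (hsn x hx)
      _ ≤ c := by linarith
  · intro x hx
    rw [norm_smul, Real.norm_of_nonneg hs.le]
    have := hb2 x (hR hx)
    nlinarith

lemma exists_approx {n : ℕ} (Ω : Set (EuclideanSpace ℝ (Fin n))) (hΩo : IsOpen Ω)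
    (hΩb : Bornology.IsBounded Ω) (hΩs : HasSmoothBoundary Ω)
    (u0 : EuclideanSpace ℝ (Fin n) → ℝ) (hum : Measurable u0) (hu0 : Integrable u0)
    (T : ℝ) (hT0 : 0 ≤ T)
    (hT : ∀ g : EuclideanSpace ℝ (Fin n) → EuclideanSpace ℝ (Fin n),
      ContDiff ℝ 1 g → HasCompactSupport g → tsupport g ⊆ Ω → (∀ x, ‖g x‖ ≤ 1) →
      ∫ x, u0 x * divg g x ≤ T) (δ : ℝ) (hδ : 0 < δ) :
    ∃ w : EuclideanSpace ℝ (Fin n) → ℝ, ContDiff ℝ (⊤ : ℕ∞) w ∧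
      ∫⁻ x in Ω, ‖w x - u0 x‖ₑ ≤ ENNReal.ofReal δ ∧
      ∫⁻ x in Ω, ENNReal.ofReal ‖fderiv ℝ w x‖ ≤ ENNReal.ofReal (T + δ) := by
  have hΩfin : volume Ω ≠ ⊤ := hΩb.measure_lt_top.ne
  obtain ⟨X, hX, s0, hs0, hXin⟩ := exists_field Ω hΩo hΩb hΩs
  obtain ⟨η, hη, hnear⟩ := near_identity_L1 volume Ω hΩfin u0 hu0 δ hδ
  set τ : ℝ := min 1 (min (η / 2) (δ / (3 * (T + 1)))) with hτ
  have hτ0 : 0 < τ := lt_min one_pos (lt_min (by positivity) (by positivity))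
  have hτ1 : τ ≤ 1 := min_le_left _ _
  have hτη : τ ≤ η / 2 := (min_le_right _ _).trans (min_le_left _ _)
  have hτT : τ * (3 * (T + 1)) ≤ δ := by
    rw [← le_div_iff₀ (by positivity)]
    exact (min_le_right _ _).trans (min_le_right _ _)
  obtain ⟨s1, hs1, hid⟩ := near_identity volume Ω hΩo hΩb X (hX.of_le (by simp)) (1 + τ)
    (by linarith)
  obtain ⟨s, hs, hslt⟩ := exists_between (lt_min hs0 hs1)
  obtain ⟨hKm, hcv, hdn, hdisp⟩ := hid s hs (hslt.trans_le (min_le_right _ _))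
  set Φ : EuclideanSpace ℝ (Fin n) → EuclideanSpace ℝ (Fin n) := fun x => x - s • X x with hΦ
  have hΦs : ContDiff ℝ (⊤ : ℕ∞) Φ := contDiff_id.sub (hX.const_smul s)
  have hin : ∀ x ∈ closure Ω, Φ x ∈ Ω := hXin s hs (hslt.trans_le (min_le_left _ _))
  have hK' : IsCompact (Φ '' closure Ω) := hΩb.isCompact_closure.image hΦs.continuous
  have hK'Ω : Φ '' closure Ω ⊆ Ω := by rintro _ ⟨x, hx, rfl⟩; exact hin x hx
  obtain ⟨r, hr, hrsub⟩ := hK'.exists_cthickening_subset_open hΩo hK'Ω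
  have hr' : 0 < min r (η / 2) := lt_min hr (by positivity)
  let φ : ContDiffBump (0 : EuclideanSpace ℝ (Fin n)) :=
    ⟨min r (η / 2) / 2, min r (η / 2), by positivity, by linarith⟩
  have hφ : φ.rOut = min r (η / 2) := rfl
  obtain ⟨U, hUs, hUeq, hUT⟩ := exists_mollified Ω u0 hu0 T hT φ (Φ '' Ω) (Φ '' closure Ω) hKm hK'
    (image_mono subset_closure)
    ((cthickening_mono (by rw [hφ]; exact min_le_left _ _) _).trans hrsub)
  refine ⟨fun x => U (Φ x), hUs.comp hΦs, ?_, ?_⟩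
  · set ρ := φ.normed (volume : Measure (EuclideanSpace ℝ (Fin n))) with hρ
    have hρi : ∫ y, ρ y = 1 := φ.integral_normed
    have hρn : ∀ y, 0 ≤ ρ y := fun y => φ.nonneg_normed y
    have hρint : Integrable ρ := φ.integrable_normed
    have hρm : Measurable ρ := φ.continuous_normed.measurable
    have hΦm : Measurable Φ := hΦs.continuous.measurable
    have hpt : ∀ x, ‖U (Φ x) - u0 x‖ₑ ≤ ∫⁻ y, ENNReal.ofReal (ρ y) * ‖u0 (Φ x - y) - u0 x‖ₑ := by
      intro x
      have hex : Integrable fun y => ρ y * u0 (Φ x - y) := by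
        obtain ⟨M, hM⟩ := (φ.continuous_normed (μ := volume)).bounded_above_of_compact_support
          φ.hasCompactSupport_normed
        exact (hu0.comp_sub_left (Φ x)).bdd_mul hρm.aestronglyMeasurable (Eventually.of_forall hM)
      have h1 : U (Φ x) - u0 x = ∫ y, ρ y * (u0 (Φ x - y) - u0 x) := by
        simp only [mul_sub]
        rw [integral_sub hex (hρint.mul_const _), integral_mul_const, hρi, one_mul, hUeq]
      rw [h1]
      refine (enorm_integral_le_lintegral_enorm _).trans (le_of_eq ?_)
      refine lintegral_congr fun y => ?_
      rw [enorm_mul, Real.enorm_eq_ofReal (hρn y)]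
    have hT2 : ∀ y, ‖y‖ < φ.rOut →
        ∫⁻ x in Ω, ‖u0 (Φ x - y) - u0 x‖ₑ ≤ ENNReal.ofReal δ := by
      intro y hy
      refine hnear (fun x => Φ x - y) ?_ hΩo.measurableSet ?_
      · intro x hx
        rw [dist_eq_norm]
        have : Φ x - y - x = -(s • X x) - y := by simp only [hΦ]; abel
        rw [this]
        calc _ ≤ ‖-(s • X x)‖ + ‖y‖ := norm_sub_le _ _
          _ ≤ η / 2 + η / 2 := by
            rw [norm_neg]
            have h1 := hdisp x hx
            have h2 : φ.rOut ≤ η / 2 := by rw [hφ]; exact min_le_right _ _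
            linarith
          _ = η := by ring
      · intro F
        calc ∫⁻ x in Ω, F (Φ x - y) ≤ ENNReal.ofReal (1 + τ) * ∫⁻ z in Φ '' Ω, F (z - y) :=
              hcv fun z => F (z - y)
          _ ≤ ENNReal.ofReal 2 * ∫⁻ z, F (z - y) := by
              gcongr
              · linarith
              · exact Measure.restrict_le_self
          _ = 2 * ∫⁻ z, F z := by
              rw [lintegral_sub_right_eq_self F y]; simp
    calc ∫⁻ x in Ω, ‖U (Φ x) - u0 x‖ₑ
        ≤ ∫⁻ x in Ω, ∫⁻ y, ENNReal.ofReal (ρ y) * ‖u0 (Φ x - y) - u0 x‖ₑ :=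
          lintegral_mono fun x => hpt x
      _ = ∫⁻ y, ∫⁻ x in Ω, ENNReal.ofReal (ρ y) * ‖u0 (Φ x - y) - u0 x‖ₑ := by
          apply lintegral_lintegral_swap
          apply Measurable.aemeasurable
          simp only [Function.uncurry_def]
          fun_prop
      _ ≤ ∫⁻ y, ENNReal.ofReal (ρ y) * ENNReal.ofReal δ := by
          refine lintegral_mono fun y => ?_
          simp only
          rw [lintegral_const_mul' _ _ ENNReal.ofReal_ne_top]
          by_cases hy : ‖y‖ < φ.rOut
          · gcongr; exact hT2 y hy
          · have : ρ y = 0 := by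
              by_contra hne
              have h1 : y ∈ Function.support (φ.normed volume) := hne
              rw [φ.support_normed_eq, mem_ball_zero_iff] at h1
              exact hy h1
            simp [this]
      _ = ENNReal.ofReal δ := by
          rw [lintegral_mul_const _ (by fun_prop),
            ← ofReal_integral_eq_lintegral_ofReal hρint (Eventually.of_forall hρn), hρi]
          simp
  · have hfd : ∀ x ∈ Ω, ENNReal.ofReal ‖fderiv ℝ (fun x => U (Φ x)) x‖ ≤
        ENNReal.ofReal (1 + τ) * ENNReal.ofReal ‖fderiv ℝ U (Φ x)‖ := by
      intro x hx
      have h1 := (hUs.differentiable (by simp) (Φ x)).hasFDerivAt.comp x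
        (hΦs.differentiable (by simp) x).hasFDerivAt
      have h2 : fderiv ℝ (fun x => U (Φ x)) x = (fderiv ℝ U (Φ x)).comp (fderiv ℝ Φ x) := h1.fderiv
      rw [h2, ← ENNReal.ofReal_mul (by linarith)]
      apply ENNReal.ofReal_le_ofReal
      refine (ContinuousLinearMap.opNorm_comp_le _ _).trans ?_
      rw [mul_comm]
      gcongr
      exact hdn x hx
    calc _ ≤ ∫⁻ x in Ω, ENNReal.ofReal (1 + τ) * ENNReal.ofReal ‖fderiv ℝ U (Φ x)‖ :=
          setLIntegral_mono' hΩo.measurableSet hfd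
      _ = ENNReal.ofReal (1 + τ) * ∫⁻ x in Ω, ENNReal.ofReal ‖fderiv ℝ U (Φ x)‖ :=
          lintegral_const_mul' _ _ ENNReal.ofReal_ne_top
      _ ≤ ENNReal.ofReal (1 + τ) * (ENNReal.ofReal (1 + τ) * ENNReal.ofReal T) := by
          gcongr
          exact (hcv fun z => ENNReal.ofReal ‖fderiv ℝ U z‖).trans (by gcongr)
      _ ≤ _ := by
          rw [← ENNReal.ofReal_mul (by linarith), ← ENNReal.ofReal_mul (by linarith)]
          apply ENNReal.ofReal_le_ofReal
          have : τ * τ ≤ τ := by nlinarith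
          nlinarith

lemma exists_small_param (T V δ0 : ℝ) (hδ0 : 0 < δ0) :
    ∃ τ : ℝ, 0 < τ ∧ τ < 1 ∧
      ((1 + τ) ^ 2 + 1) * (1 + τ) / (1 - τ) * (T + τ + τ * V) ≤ 2 * T + δ0 := by
  have hc : ContinuousAt
      (fun τ : ℝ => ((1 + τ) ^ 2 + 1) * (1 + τ) / (1 - τ) * (T + τ + τ * V)) 0 := by
    refine ContinuousAt.mul (ContinuousAt.div ?_ ?_ (by norm_num)) ?_ <;> fun_prop
  have h1 : ∀ᶠ τ : ℝ in nhds 0,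
      ((1 + τ) ^ 2 + 1) * (1 + τ) / (1 - τ) * (T + τ + τ * V) < 2 * T + δ0 := by
    refine hc.eventually_lt continuousAt_const ?_
    norm_num
    linarith
  have h2 : ∀ᶠ τ : ℝ in nhdsWithin 0 (Ioi 0), 0 < τ ∧ τ < 1 ∧
      ((1 + τ) ^ 2 + 1) * (1 + τ) / (1 - τ) * (T + τ + τ * V) < 2 * T + δ0 := by
    filter_upwards [self_mem_nhdsWithin, nhdsWithin_le_nhds (Iio_mem_nhds (zero_lt_one' ℝ)),
      nhdsWithin_le_nhds h1] with τ a b c using ⟨a, b, c⟩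
  obtain ⟨τ, a, b, c⟩ := h2.exists
  exact ⟨τ, a, b, c.le⟩

lemma key_approx {n : ℕ} (Ω : Set (EuclideanSpace ℝ (Fin n))) (hΩo : IsOpen Ω)
    (hΩb : Bornology.IsBounded Ω) (hΩs : HasSmoothBoundary Ω)
    (u : EuclideanSpace ℝ (Fin n) → ℝ) (hum : AEStronglyMeasurable u (volume.restrict Ω))
    (hu1 : ∀ᵐ x ∂(volume.restrict Ω), |u x| = 1) (hbdd : BddAbove (tvSet Ω u))
    (δ0 : ℝ) (hδ0 : 0 < δ0) :
    ∃ ε0 > 0, ∀ ε : ℝ, 0 < ε → ε < ε0 → ∃ v : EuclideanSpace ℝ (Fin n) → ℝ,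
      (∀ x, v x ∈ Icc (-1 : ℝ) 1) ∧ ∫ x in Ω, |v x - u x| ≤ δ0 ∧
      Jeps Ω ε v ≤ ENNReal.ofReal (2 * sSup (tvSet Ω u)) + ENNReal.ofReal δ0 := by
  have hΩm : MeasurableSet Ω := hΩo.measurableSet
  have hΩfin : volume Ω ≠ ⊤ := hΩb.measure_lt_top.ne
  set T := sSup (tvSet Ω u) with hTdef
  have hT0 : 0 ≤ T := by
    refine le_csSup hbdd ⟨fun _ => 0, contDiff_const, HasCompactSupport.zero, ?_, by simp, ?_⟩
    · have : tsupport (fun _ : EuclideanSpace ℝ (Fin n) => (0 : EuclideanSpace ℝ (Fin n))) = ∅ := by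
        rw [tsupport_eq_empty_iff]; rfl
      rw [this]; exact empty_subset _
    · simp [divg]
  set u0 : EuclideanSpace ℝ (Fin n) → ℝ := Ω.indicator (hum.mk u) with hu0def
  have hu0m : Measurable u0 := hum.stronglyMeasurable_mk.measurable.indicator hΩm
  have hae : ∀ᵐ x ∂(volume.restrict Ω), u0 x = u x := by
    filter_upwards [hum.ae_eq_mk, ae_restrict_mem hΩm] with x hx hxΩ
    rw [hu0def, indicator_of_mem hxΩ, hx]
  have hu0i : Integrable u0 := by
    rw [hu0def, integrable_indicator_iff hΩm]
    refine Measure.integrableOn_of_bounded (M := 1) hΩfin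
      hum.stronglyMeasurable_mk.aestronglyMeasurable ?_
    filter_upwards [hum.ae_eq_mk, hu1] with x hx h1
    rw [← hx, Real.norm_eq_abs, h1]
  have hTg : ∀ g : EuclideanSpace ℝ (Fin n) → EuclideanSpace ℝ (Fin n),
      ContDiff ℝ 1 g → HasCompactSupport g → tsupport g ⊆ Ω → (∀ x, ‖g x‖ ≤ 1) →
      ∫ x, u0 x * divg g x ≤ T := by
    intro g h1 h2 h3 h4
    refine le_csSup hbdd ⟨g, h1, h2, h3, h4, ?_⟩
    have : ∀ x ∉ Ω, u0 x * divg g x = 0 := by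
      intro x hx
      rw [hu0def, indicator_of_notMem hx, zero_mul]
    rw [← setIntegral_eq_integral_of_forall_compl_eq_zero this]
    refine integral_congr_ae ?_
    filter_upwards [hae] with x hx
    rw [hx]
  set V := (volume Ω).toReal with hV
  have hV0 : 0 ≤ V := ENNReal.toReal_nonneg
  obtain ⟨τ, hτ0, hτ1, hτ⟩ := exists_small_param T V δ0 hδ0
  set δ := min τ (δ0 * τ / 4) with hδdef
  have hδ : 0 < δ := lt_min hτ0 (by positivity)
  obtain ⟨w, hw, hw1, hw2⟩ := exists_approx Ω hΩo hΩb hΩs u0 hu0m hu0i T hT0 hTg δ hδ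
  obtain ⟨ε0, hε0, H⟩ := energy_bound Ω hΩo hΩb w (contDiff_infty.1 hw 2) τ τ τ
    hτ0 hτ0 hτ0 hτ1
  refine ⟨ε0, hε0, fun ε h1 h2 => ?_⟩
  obtain ⟨v, hv, hvc, hvw, hJ⟩ := H ε h1 h2
  refine ⟨v, hv, ?_, hJ.trans ?_⟩
  · have hm : AEStronglyMeasurable (fun x => |v x - u x|) (volume.restrict Ω) :=
      (hvc.aestronglyMeasurable.sub hum).norm
    rw [integral_eq_lintegral_of_nonneg_ae (Eventually.of_forall fun x => abs_nonneg _) hm]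
    refine ENNReal.toReal_le_of_le_ofReal hδ0.le ?_
    calc ∫⁻ x in Ω, ENNReal.ofReal |v x - u x|
        ≤ ∫⁻ x in Ω, ENNReal.ofReal (4 / τ) * ‖w x - u0 x‖ₑ := by
          refine lintegral_mono_ae ?_
          filter_upwards [hae, hu1, ae_restrict_mem hΩm] with x a b c
          rw [a, ← ofReal_norm, ← ENNReal.ofReal_mul (by positivity)]
          exact ENNReal.ofReal_le_ofReal (hvw x c _ b)
      _ = ENNReal.ofReal (4 / τ) * ∫⁻ x in Ω, ‖w x - u0 x‖ₑ :=
          lintegral_const_mul' _ _ ENNReal.ofReal_ne_top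
      _ ≤ ENNReal.ofReal (4 / τ) * ENNReal.ofReal (δ0 * τ / 4) := by
          gcongr
          exact hw1.trans (ENNReal.ofReal_le_ofReal (min_le_right _ _))
      _ = ENNReal.ofReal δ0 := by
          rw [← ENNReal.ofReal_mul (by positivity)]
          congr 1
          field_simp
  · have hC : 0 ≤ ((1 + τ) ^ 2 + 1) * (1 + τ) / (1 - τ) :=
      div_nonneg (by positivity) (by linarith)
    have hm : ∫⁻ x in Ω, ENNReal.ofReal (√(‖gradient w x‖ ^ 2 + τ ^ 2)) ≤
        ENNReal.ofReal (T + τ + τ * V) := by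
      calc _ ≤ ∫⁻ x in Ω, (ENNReal.ofReal ‖fderiv ℝ w x‖ + ENNReal.ofReal τ) := by
            refine lintegral_mono fun x => ?_
            rw [← ENNReal.ofReal_add (norm_nonneg _) hτ0.le]
            refine ENNReal.ofReal_le_ofReal ?_
            have hg : ‖gradient w x‖ = ‖fderiv ℝ w x‖ := by simp [gradient]
            rw [hg, Real.sqrt_le_iff]
            exact ⟨by positivity, by nlinarith [norm_nonneg (fderiv ℝ w x)]⟩
        _ = (∫⁻ x in Ω, ENNReal.ofReal ‖fderiv ℝ w x‖) + ENNReal.ofReal τ * volume Ω := by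
            rw [lintegral_add_right _ measurable_const, setLIntegral_const]
        _ ≤ ENNReal.ofReal (T + τ) + ENNReal.ofReal τ * ENNReal.ofReal V := by
            rw [hV, ENNReal.ofReal_toReal hΩfin]
            gcongr
            exact hw2.trans (ENNReal.ofReal_le_ofReal (by gcongr; exact min_le_left _ _))
        _ = _ := by
            rw [← ENNReal.ofReal_mul hτ0.le, ← ENNReal.ofReal_add (by positivity) (by positivity)]
    calc _ ≤ ENNReal.ofReal (((1 + τ) ^ 2 + 1) * (1 + τ) / (1 - τ)) *
          ENNReal.ofReal (T + τ + τ * V) := by gcongr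
      _ ≤ ENNReal.ofReal (2 * T + δ0) := by
          rw [← ENNReal.ofReal_mul hC]
          exact ENNReal.ofReal_le_ofReal hτ
      _ = _ := ENNReal.ofReal_add (by positivity) hδ0.le

lemma Jeps_const_one {n : ℕ} (Ω : Set (EuclideanSpace ℝ (Fin n))) (ε : ℝ) :
    Jeps Ω ε (fun _ => 1) = 0 := by
  rw [Jeps, if_pos (differentiableOn_const 1)]
  simp [gradient]

/-- **Γ-limsup (recovery sequence) inequality for the free boundary Allen–Cahn
functional.** If `Ω ⊂ ℝⁿ` is bounded open with smooth boundary and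
`u ∈ L¹(Ω;[-1,1])`, then for every sequence `ε_i → 0⁺` there is a recovery
sequence `u_{ε_i} ∈ L¹(Ω;[-1,1])` with `u_{ε_i} → u` in `L¹(Ω)` and
`limsup_{i→∞} J_{ε_i}(u_{ε_i}) ≤ J₀(u)`. -/
theorem stmt_11 (n : ℕ) (Ω : Set (EuclideanSpace ℝ (Fin n))) (hΩo : IsOpen Ω)
    (hΩb : Bornology.IsBounded Ω) (hΩs : HasSmoothBoundary Ω)
    (u : EuclideanSpace ℝ (Fin n) → ℝ)
    (hu : ∀ x, u x ∈ Icc (-1 : ℝ) 1)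
    (εs : ℕ → ℝ) (hεpos : ∀ i, 0 < εs i) (hεlim : Tendsto εs atTop (nhds 0)) :
    ∃ us : ℕ → EuclideanSpace ℝ (Fin n) → ℝ,
      (∀ i x, us i x ∈ Icc (-1 : ℝ) 1) ∧
      Tendsto (fun i => ∫ x in Ω, |us i x - u x|) atTop (nhds 0) ∧
      Filter.limsup (fun i => Jeps Ω (εs i) (us i)) atTop ≤ Jzero Ω u := by
  by_cases hum : AEStronglyMeasurable u (volume.restrict Ω)
  swap
  · refine ⟨fun _ _ => 1, fun _ _ => by norm_num, ?_, ?_⟩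
    · have : ∫ x in Ω, |1 - u x| = 0 := by
        refine integral_undef fun h => hum ?_
        have h2 : AEStronglyMeasurable (fun x => 1 - |1 - u x|) (volume.restrict Ω) :=
          aestronglyMeasurable_const.sub h.aestronglyMeasurable
        refine h2.congr (Eventually.of_forall fun x => ?_)
        have := (hu x).2
        simp only
        rw [abs_of_nonneg (by linarith)]
        ring
      simp only [this]
      exact tendsto_const_nhds
    · simp [Jeps_const_one]
  by_cases hfin : (∀ᵐ x ∂(volume.restrict Ω), |u x| = 1) ∧ BddAbove (tvSet Ω u)
  swap
  · refine ⟨fun _ => u, fun _ => hu, by simp, ?_⟩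
    rw [Jzero, if_neg hfin]
    exact le_top
  rw [Jzero, if_pos hfin]
  set J0 := ENNReal.ofReal (2 * sSup (tvSet Ω u)) with hJ0
  let P : ℕ → ℕ → Prop := fun k i => ∃ v : EuclideanSpace ℝ (Fin n) → ℝ,
    (∀ x, v x ∈ Icc (-1 : ℝ) 1) ∧ ∫ x in Ω, |v x - u x| ≤ 1 / ((k : ℝ) + 1) ∧
      Jeps Ω (εs i) v ≤ J0 + ENNReal.ofReal (1 / ((k : ℝ) + 1))
  have hP : ∀ k, ∀ᶠ i in atTop, P k i := by
    intro k
    obtain ⟨ε0, hε0, H⟩ := key_approx Ω hΩo hΩb hΩs u hum hfin.1 hfin.2 (1 / ((k : ℝ) + 1))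
      (by positivity)
    filter_upwards [hεlim.eventually (Iio_mem_nhds hε0)] with i hi
    exact H (εs i) (hεpos i) hi
  let K : ℕ → ℕ := fun i => Nat.findGreatest (fun k => P k i) i
  have hK : ∀ᶠ i in atTop, P (K i) i := by
    filter_upwards [hP 0] with i hi
    exact Nat.findGreatest_spec (P := fun k => P k i) (Nat.zero_le i) hi
  have hKt : Tendsto K atTop atTop := by
    refine tendsto_atTop.2 fun k => ?_
    filter_upwards [hP k, eventually_ge_atTop k] with i hi hki
    exact Nat.le_findGreatest hki hi
  let us : ℕ → EuclideanSpace ℝ (Fin n) → ℝ := fun i =>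
    if h : P (K i) i then h.choose else fun _ => 0
  have hus : ∀ i, P (K i) i → (∀ x, us i x ∈ Icc (-1 : ℝ) 1) ∧
      ∫ x in Ω, |us i x - u x| ≤ 1 / ((K i : ℝ) + 1) ∧
      Jeps Ω (εs i) (us i) ≤ J0 + ENNReal.ofReal (1 / ((K i : ℝ) + 1)) := by
    intro i h
    have : us i = h.choose := dif_pos h
    rw [this]
    exact h.choose_spec
  have hlim : Tendsto (fun i => 1 / ((K i : ℝ) + 1)) atTop (nhds 0) :=
    tendsto_one_div_add_atTop_nhds_zero_nat.comp hKt
  refine ⟨us, fun i => ?_, ?_, ?_⟩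
  · by_cases h : P (K i) i
    · exact (hus i h).1
    · intro x
      have : us i = fun _ => 0 := dif_neg h
      rw [this]
      norm_num
  · refine tendsto_of_tendsto_of_tendsto_of_le_of_le' tendsto_const_nhds hlim ?_ ?_
    · exact Eventually.of_forall fun i => integral_nonneg fun x => abs_nonneg _
    · filter_upwards [hK] with i hi using (hus i hi).2.1
  · have hJlim : Tendsto (fun i => J0 + ENNReal.ofReal (1 / ((K i : ℝ) + 1))) atTop (nhds J0) := by
      have := (ENNReal.tendsto_ofReal hlim).const_add J0
      simpa using this
    calc _ ≤ limsup (fun i => J0 + ENNReal.ofReal (1 / ((K i : ℝ) + 1))) atTop := by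
          refine limsup_le_limsup ?_
          filter_upwards [hK] with i hi using (hus i hi).2.2
      _ = J0 := hJlim.limsup_eq
end
end
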